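/- arXiv:2110.05045 — 7 statements merged into one kernel-verified Lean document; each statement's English description precedes it below -/
import Mathlib

section
/- Let M > 0 and let g : [s₀, s₁] → ℝ (with s₀ < s₁) be a Lipschitz function such that |g′(s)| ≤ √(M² − g(s)²) for Lebesgue-almost every s, whose minimum value on [s₀, s₁] is −M and whose maximum value is M. Then s₁ − s₀ ≥ π. -/
/-!
Formally `arcsin (g / M)` is `1`-Lipschitz and runs from `-π/2` to `π/2`, but `arcsin` fails to
be Lipschitz at `±1`, so absolute continuity of the composition is not immediate. For
`0 < r < 1` the function `h = arcsin (r * g / M)` is Lipschitz, since `arcsin` is Lipschitz on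
`[-r, r]`, and almost everywhere
`|h'| = r |g'| / √(M² - r² g²) ≤ √(r² M² - r² g²) / √(M² - r² g²) ≤ 1`.
The fundamental theorem of calculus between a minimum point and a maximum point of `g` gives
`2 arcsin r ≤ s₁ - s₀`, and `r → 1` concludes.
-/

open MeasureTheory Set

lemma arcsin_lipschitzOnWith_Icc {r : ℝ} (h1 : r < 1) :
    LipschitzOnWith (Real.toNNReal (1 / √(1 - r ^ 2))) Real.arcsin (Icc (-r) r) := by
  apply Convex.lipschitzOnWith_of_nnnorm_hasDerivWithin_le (𝕜 := ℝ)
    (f' := fun x => 1 / √(1 - x ^ 2)) (convex_Icc _ _)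
  · intro x hx
    exact (Real.hasDerivAt_arcsin (by linarith [hx.1]) (by linarith [hx.2])).hasDerivWithinAt
  · intro x hx
    have hr : 0 ≤ r := by linarith [hx.1, hx.2]
    rw [← NNReal.coe_le_coe, coe_nnnorm, Real.coe_toNNReal _ (by positivity), Real.norm_eq_abs,
      abs_of_nonneg (by positivity)]
    apply one_div_le_one_div_of_le
    · apply Real.sqrt_pos.2
      nlinarith
    · apply Real.sqrt_le_sqrt
      nlinarith [hx.1, hx.2]

/-- The derivative of `arcsin (r * g / M)` has absolute value at most `1`, where `y` is the value
of `g` and `d` its derivative. -/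
lemma abs_arcsin_comp_deriv_le {M r y d : ℝ} (hM : 0 < M) (h0 : 0 < r) (h1 : r < 1)
    (hy : |y| ≤ M) (hd : |d| ≤ √(M ^ 2 - y ^ 2)) :
    |1 / √(1 - (r / M * y) ^ 2) * (r / M * d)| ≤ 1 := by
  have hy2 : y ^ 2 ≤ M ^ 2 := sq_le_sq' (by linarith [(abs_le.1 hy).1]) (abs_le.1 hy).2
  have hr2 : r ^ 2 < 1 := by nlinarith
  have hd2 : d ^ 2 ≤ M ^ 2 - y ^ 2 := by
    rw [← sq_abs]
    exact (Real.le_sqrt (abs_nonneg _) (by linarith)).1 hd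
  have key : (r / M * d) ^ 2 ≤ 1 - (r / M * y) ^ 2 := by
    have e : (r / M * d) ^ 2 + (r / M * y) ^ 2 = r ^ 2 * ((d ^ 2 + y ^ 2) / M ^ 2) := by
      field_simp
    have : (d ^ 2 + y ^ 2) / M ^ 2 ≤ 1 := by
      rw [div_le_one (by positivity)]
      linarith
    nlinarith [sq_nonneg r]
  rw [abs_mul, abs_of_nonneg (by positivity), one_div_mul_eq_div]
  exact div_le_one_of_le₀ (Real.abs_le_sqrt key) (Real.sqrt_nonneg _)

/-- One-dimensional length comparison: if `g` is Lipschitz on `[s₀, s₁]` with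
`|g′| ≤ √(M² − g²)` almost everywhere, and `g` attains minimum value `-M` and
maximum value `M` on `[s₀, s₁]`, then `s₁ − s₀ ≥ π`. -/
theorem stmt_1 (M s₀ s₁ : ℝ) (hM : 0 < M) (hs : s₀ < s₁)
    (g : ℝ → ℝ) (K : NNReal) (hg : LipschitzOnWith K g (Set.Icc s₀ s₁))
    (hderiv : ∀ᵐ s ∂(volume : Measure ℝ), s ∈ Set.Icc s₀ s₁ →
      DifferentiableWithinAt ℝ g (Set.Icc s₀ s₁) s →
      |derivWithin g (Set.Icc s₀ s₁) s| ≤ Real.sqrt (M ^ 2 - g s ^ 2))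
    (hmin : IsLeast (g '' Set.Icc s₀ s₁) (-M))
    (hmax : IsGreatest (g '' Set.Icc s₀ s₁) M) :
    Real.pi ≤ s₁ - s₀ := by
  obtain ⟨a, ha, hga⟩ := hmin.1
  obtain ⟨b, hb, hgb⟩ := hmax.1
  have hbd : ∀ x ∈ Icc s₀ s₁, |g x| ≤ M := fun x hx =>
    abs_le.2 ⟨hmin.2 (mem_image_of_mem g hx), hmax.2 (mem_image_of_mem g hx)⟩
  have hsub : uIcc a b ⊆ Icc s₀ s₁ := uIcc_subset_Icc ha hb
  have main : ∀ r ∈ Ioo (0 : ℝ) 1, 2 * Real.arcsin r ≤ s₁ - s₀ := by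
    rintro r ⟨h0, h1⟩
    have hmaps : MapsTo (fun x => r / M * g x) (uIcc a b) (Icc (-r) r) := by
      intro x hx
      rw [mem_Icc, ← abs_le, abs_mul, abs_of_pos (by positivity : 0 < r / M)]
      calc r / M * |g x| ≤ r / M * M := by gcongr; exact hbd x (hsub hx)
        _ = r := by field_simp
    have hlin : LipschitzWith ‖r / M‖₊ (fun y : ℝ => r / M * y) := by
      simpa using lipschitzWith_smul (β := ℝ) (r / M)
    have hlip : LipschitzOnWith _ (Real.arcsin ∘ fun x => r / M * g x) (uIcc a b) :=
      (arcsin_lipschitzOnWith_Icc h1).comp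
      (hlin.comp_lipschitzOnWith (hg.mono hsub)) hmaps
    have hint := hlip.absolutelyContinuousOnInterval.integral_deriv_eq_sub
    have hbound : ∀ᵐ x ∂(volume : Measure ℝ), x ∈ uIoc a b →
        ‖deriv (Real.arcsin ∘ fun x => r / M * g x) x‖ ≤ 1 := by
      filter_upwards [hderiv, hg.ae_differentiableWithinAt_of_mem,
        Measure.ae_ne volume s₀, Measure.ae_ne volume s₁] with x hx hdx hx0 hx1 hxab
      have hmem := uIoc_subset_uIcc hxab
      have hxI := hsub hmem
      have hnhds : Icc s₀ s₁ ∈ nhds x :=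
        Icc_mem_nhds (lt_of_le_of_ne hxI.1 hx0.symm) (lt_of_le_of_ne hxI.2 hx1)
      have hd := hx hxI (hdx hxI)
      rw [derivWithin_of_mem_nhds hnhds] at hd
      have hgd := ((hdx hxI).differentiableAt hnhds).hasDerivAt
      have hv := hmaps hmem
      have hcomp := (Real.hasDerivAt_arcsin (x := r / M * g x)
        (by linarith [hv.1]) (by linarith [hv.2])).comp x (hgd.const_mul (r / M))
      rw [hcomp.deriv, Real.norm_eq_abs]
      exact abs_arcsin_comp_deriv_le hM h0 h1 (hbd x hxI) hd
    have hle := intervalIntegral.norm_integral_le_of_norm_le_const_ae hbound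
    have e1 : r / M * M = r := by field_simp
    simp only [hint, Function.comp_apply, hga, hgb, mul_neg, e1, Real.arcsin_neg,
      Real.norm_eq_abs] at hle
    have h2 : |b - a| ≤ s₁ - s₀ :=
      abs_le.2 ⟨by linarith [ha.2, hb.1], by linarith [ha.1, hb.2]⟩
    linarith [le_abs_self (Real.arcsin r - -Real.arcsin r)]
  have hlim : Filter.Tendsto (fun r => 2 * Real.arcsin r) (nhdsWithin 1 (Iio 1))
      (nhds (2 * Real.arcsin 1)) :=
    ((continuous_const.mul Real.continuous_arcsin).tendsto 1).mono_left nhdsWithin_le_nhds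
  have hfin := le_of_tendsto hlim
    (Filter.mem_of_superset (Ioo_mem_nhdsLT (zero_lt_one' ℝ)) main)
  rw [Real.arcsin_one] at hfin
  linarith
end

section
/- Let M > 0 and let g : [s₀, s₁] → ℝ be a Lipschitz function such that |g′(s)| ≤ √(M² − g(s)²) for Lebesgue-almost every s, with g(s₀) = −M, g(s₁) = M, and s₁ − s₀ = π. Then g(s) = −M·cos(s − s₀) for every s ∈ [s₀, s₁]. In particular, g is continuously differentiable with g′(s) = M·sin(s − s₀) ≥ 0, g is strictly increasing on (s₀, s₁), and g(s)² + g′(s)² = M² for every s ∈ [s₀, s₁]. -/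
/-!
The quantity `arcsin (g / M)` changes at speed at most one, because `|g′| ≤ √(M² - g²)`.  It has to
travel from `-π/2` to `π/2` in time `π`, so its speed is exactly one throughout, that is
`arcsin (g s / M) = s - s₀ - π/2`; taking sines gives `g s = -M cos (s - s₀)`, and the
remaining claims follow.

Two points need care.  First, the hypothesis allows a priori `|g| > M`, where the square root is
zero by convention; `le_of_abs_deriv_le`, applied to `g` and to `-g`, shows that `g` cannot leave `[-M, M]`, since `max g M`
has derivative zero almost everywhere.  Second, `arcsin` is not Lipschitz near `±1`, so
`arcsin (g / M)` is not visibly absolutely continuous.  The speed bound is therefore proved for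
`arcsin (c * g / M)` with `c < 1` (`arcsin_scaled_sub_le`), where the argument of `arcsin` avoids
the singularities, and `c` is then sent to `1`.
The passage from almost-everywhere derivative bounds to increments
(`LipschitzOnWith.sub_le_of_ae_deriv_le`) is the fundamental theorem of calculus for absolutely
continuous functions.
-/

open MeasureTheory Set

theorem LipschitzOnWith.sub_le_of_ae_deriv_le {f : ℝ → ℝ} {K : NNReal} {a b C : ℝ} (hab : a ≤ b)
    (hf : LipschitzOnWith K f (Icc a b))
    (hd : ∀ᵐ s ∂(volume : Measure ℝ), s ∈ Ioo a b → ∀ d, HasDerivAt f d s → d ≤ C) :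
    f b - f a ≤ C * (b - a) := by
  have hac : AbsolutelyContinuousOnInterval f a b := by
    apply LipschitzOnWith.absolutelyContinuousOnInterval (K := K)
    rwa [uIcc_of_le hab]
  have hI := hac.integral_deriv_eq_sub
  have hmono : ∫ x in a..b, deriv f x ≤ ∫ _ in a..b, C := by
    rw [intervalIntegral.integral_of_le hab, intervalIntegral.integral_of_le hab,
      integral_Ioc_eq_integral_Ioo, integral_Ioc_eq_integral_Ioo]
    apply setIntegral_mono_on_ae
    · exact ((intervalIntegrable_iff_integrableOn_Ioo_of_le hab).1 hac.intervalIntegrable_deriv)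
    · exact integrableOn_const (by simp)
    · exact measurableSet_Ioo
    · filter_upwards [hac.ae_differentiableAt, hd] with x hx hx' hm
      refine hx' hm _ (hx ?_).hasDerivAt
      rw [uIcc_of_le hab]
      exact Ioo_subset_Icc_self hm
  rw [hI, intervalIntegral.integral_const, smul_eq_mul] at hmono
  linarith

/-- A Lipschitz function with `g a ≤ M` never exceeds `M`: almost everywhere on `{g > M}`
its derivative is bounded by `√(M² - g²) = 0`. -/
theorem le_of_abs_deriv_le {M a b : ℝ} (hM : 0 < M) {g : ℝ → ℝ} {K : NNReal}
    (hg : LipschitzOnWith K g (Icc a b))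
    (hd : ∀ᵐ s ∂(volume : Measure ℝ), s ∈ Ioo a b →
      ∃ d, HasDerivAt g d s ∧ |d| ≤ Real.sqrt (M ^ 2 - g s ^ 2))
    (ha : g a ≤ M) : ∀ s ∈ Icc a b, g s ≤ M := by
  intro s hs
  have hp : LipschitzOnWith K (fun x => max (g x) M) (Icc a s) := by
    have hgs : LipschitzOnWith K g (Icc a s) := hg.mono (Icc_subset_Icc_right hs.2)
    rw [lipschitzOnWith_iff_dist_le_mul] at hgs ⊢
    intro x hx y hy
    refine le_trans ?_ (hgs x hx y hy)
    rw [Real.dist_eq, Real.dist_eq]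
    exact abs_max_sub_max_le_abs _ _ _
  have h := hp.sub_le_of_ae_deriv_le (C := 0) hs.1 (by
    filter_upwards [hd] with x hx hxm e he
    obtain ⟨d, hgd, hdle⟩ := hx ⟨hxm.1, hxm.2.trans_le hs.2⟩
    rcases lt_or_ge M (g x) with hlt | hge
    · have heq : (fun x => max (g x) M) =ᶠ[nhds x] g := by
        filter_upwards [hgd.continuousAt.eventually_const_lt hlt] with y hy
        exact max_eq_left hy.le
      have hed : e = d := (he.congr_of_eventuallyEq heq.symm).unique hgd
      rw [Real.sqrt_eq_zero_of_nonpos (by nlinarith)] at hdle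
      rw [hed]
      exact (le_abs_self d).trans hdle
    · -- At a point with `g x ≤ M` the truncation attains its minimum value `M`.
      have hmin : IsLocalMin (fun x => max (g x) M) x :=
        Filter.Eventually.of_forall fun y => by
          change max (g x) M ≤ max (g y) M
          rw [max_eq_right hge]
          exact le_max_right _ _
      exact (hmin.hasDerivAt_eq_zero he).le)
  simp only [max_eq_right ha] at h
  linarith [le_max_left (g s) M]

/-- The speed bound for the angle of the shrunken function `c * g / M`, which stays in
`[-c, c]`, where `arcsin` is Lipschitz. -/
theorem arcsin_scaled_sub_le {M a b c : ℝ} (hM : 0 < M) (hc0 : 0 < c) (hc1 : c < 1) (hab : a ≤ b)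
    {g : ℝ → ℝ} {K : NNReal} (hg : LipschitzOnWith K g (Icc a b))
    (hd : ∀ᵐ s ∂(volume : Measure ℝ), s ∈ Ioo a b →
      ∃ d, HasDerivAt g d s ∧ |d| ≤ Real.sqrt (M ^ 2 - g s ^ 2))
    (hb : ∀ s ∈ Icc a b, |g s| ≤ M) :
    Real.arcsin (c * (g b / M)) - Real.arcsin (c * (g a / M)) ≤ b - a := by
  have hmem : ∀ s ∈ Icc a b, c * (g s / M) ∈ Icc (-c) c := by
    intro s hs
    have h1 : |g s / M| ≤ 1 := by
      rw [abs_div, abs_of_pos hM, div_le_one hM]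
      exact hb s hs
    obtain ⟨h2, h3⟩ := abs_le.1 h1
    constructor <;> nlinarith
  obtain ⟨L, hL⟩ : ∃ L, LipschitzOnWith L Real.arcsin (Icc (-c) c) := by
    refine ContDiffOn.exists_lipschitzOnWith (n := 1) ?_ one_ne_zero (convex_Icc _ _) isCompact_Icc
    refine Real.contDiffOn_arcsin.mono ?_
    rintro x ⟨h1, h2⟩ (rfl | h)
    · linarith
    · rw [mem_singleton_iff] at h
      linarith
  have hlin : LipschitzWith (Real.toNNReal (c / M)) (fun x : ℝ => c * (x / M)) := by
    apply LipschitzWith.of_dist_le_mul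
    intro x y
    rw [Real.dist_eq, Real.dist_eq, Real.coe_toNNReal _ (by positivity),
      show c * (x / M) - c * (y / M) = c / M * (x - y) by ring, abs_mul,
      abs_of_pos (by positivity : 0 < c / M)]
  have hcomp : LipschitzOnWith (L * (Real.toNNReal (c / M) * K))
      (fun s => Real.arcsin (c * (g s / M))) (Icc a b) :=
    hL.comp (hlin.comp_lipschitzOnWith hg) hmem
  have h := hcomp.sub_le_of_ae_deriv_le (C := 1) hab (by
    filter_upwards [hd] with x hx hxm e he
    obtain ⟨d, hgd, hdle⟩ := hx hxm
    obtain ⟨hu1, hu2⟩ := hmem x (Ioo_subset_Icc_self hxm)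
    have hder := (Real.hasDerivAt_arcsin (x := c * (g x / M)) (by linarith) (by linarith)).comp x
      ((hgd.div_const M).const_mul c)
    rw [he.unique hder]
    have hpos : 0 < 1 - (c * (g x / M)) ^ 2 := by nlinarith
    rw [one_div, inv_mul_le_iff₀ (Real.sqrt_pos.2 hpos), mul_one]
    apply Real.le_sqrt_of_sq_le
    have hgM : 0 ≤ M ^ 2 - g x ^ 2 := by
      have := sq_le_sq' (abs_le.1 (hb x (Ioo_subset_Icc_self hxm))).1
        (abs_le.1 (hb x (Ioo_subset_Icc_self hxm))).2
      linarith
    have hd2 : d ^ 2 ≤ M ^ 2 - g x ^ 2 := by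
      rw [← sq_abs, ← Real.sq_sqrt hgM]
      exact pow_le_pow_left₀ (abs_nonneg d) hdle 2
    have hdM : (d / M) ^ 2 + (g x / M) ^ 2 ≤ 1 := by
      rw [div_pow, div_pow, ← add_div, div_le_one (by positivity)]
      linarith
    nlinarith [mul_le_mul_of_nonneg_left hdM (sq_nonneg c)])
  linarith

theorem arcsin_sub_le {M a b : ℝ} (hM : 0 < M) (hab : a ≤ b)
    {g : ℝ → ℝ} {K : NNReal} (hg : LipschitzOnWith K g (Icc a b))
    (hd : ∀ᵐ s ∂(volume : Measure ℝ), s ∈ Ioo a b →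
      ∃ d, HasDerivAt g d s ∧ |d| ≤ Real.sqrt (M ^ 2 - g s ^ 2))
    (hb : ∀ s ∈ Icc a b, |g s| ≤ M) :
    Real.arcsin (g b / M) - Real.arcsin (g a / M) ≤ b - a := by
  have hcont : Continuous fun c : ℝ =>
      Real.arcsin (c * (g b / M)) - Real.arcsin (c * (g a / M)) := by
    have := Real.continuous_arcsin
    fun_prop
  have ht := (hcont.tendsto 1).mono_left (nhdsWithin_le_nhds (s := Iio 1))
  simp only [one_mul] at ht
  refine le_of_tendsto ht ?_
  filter_upwards [Ioo_mem_nhdsLT (zero_lt_one' ℝ)] with c hc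
  exact arcsin_scaled_sub_le hM hc.1 hc.2 hab hg hd hb

/-- Equality (rigidity) case of the one-dimensional length comparison: if `g` is
Lipschitz on `[s₀, s₁]` with `|g′| ≤ √(M² − g²)` almost everywhere, `g s₀ = -M`,
`g s₁ = M`, and `s₁ − s₀ = π`, then `g s = -M·cos (s − s₀)`; in particular `g` is
continuously differentiable with nonnegative derivative `M·sin (s − s₀)`, strictly
increasing on `(s₀, s₁)`, and satisfies `g² + g′² = M²`. -/
theorem stmt_2 (M s₀ s₁ : ℝ) (hM : 0 < M)
    (g : ℝ → ℝ) (K : NNReal) (hg : LipschitzOnWith K g (Set.Icc s₀ s₁))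
    (hderiv : ∀ᵐ s ∂(volume : Measure ℝ), s ∈ Set.Icc s₀ s₁ →
      DifferentiableWithinAt ℝ g (Set.Icc s₀ s₁) s →
      |derivWithin g (Set.Icc s₀ s₁) s| ≤ Real.sqrt (M ^ 2 - g s ^ 2))
    (h0 : g s₀ = -M) (h1 : g s₁ = M) (hlen : s₁ - s₀ = Real.pi) :
    (∀ s ∈ Set.Icc s₀ s₁, g s = -M * Real.cos (s - s₀)) ∧
    (∀ s ∈ Set.Icc s₀ s₁,
      HasDerivWithinAt g (M * Real.sin (s - s₀)) (Set.Icc s₀ s₁) s ∧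
      0 ≤ M * Real.sin (s - s₀)) ∧
    StrictMonoOn g (Set.Ioo s₀ s₁) ∧
    (∀ s ∈ Set.Icc s₀ s₁, g s ^ 2 + (M * Real.sin (s - s₀)) ^ 2 = M ^ 2) := by
  have hle : s₀ ≤ s₁ := by linarith [Real.pi_pos]
  have hH : ∀ᵐ s ∂(volume : Measure ℝ), s ∈ Ioo s₀ s₁ →
      ∃ d, HasDerivAt g d s ∧ |d| ≤ Real.sqrt (M ^ 2 - g s ^ 2) := by
    filter_upwards [hg.ae_differentiableWithinAt_of_mem, hderiv] with s hs hs' hm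
    have hI := Ioo_subset_Icc_self hm
    have hn : Icc s₀ s₁ ∈ nhds s := Icc_mem_nhds hm.1 hm.2
    exact ⟨_, (hs hI).hasDerivWithinAt.hasDerivAt hn, hs' hI (hs hI)⟩
  have hup := le_of_abs_deriv_le hM hg hH (by linarith)
  have hlow := le_of_abs_deriv_le (g := fun s => -g s) hM hg.neg (by
    filter_upwards [hH] with s hs hm
    obtain ⟨d, h, h'⟩ := hs hm
    exact ⟨-d, h.neg, by simpa using h'⟩) (by simp [h0])
  have hb : ∀ s ∈ Icc s₀ s₁, |g s| ≤ M := fun s hs =>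
    abs_le.2 ⟨by linarith [hlow s hs], hup s hs⟩
  have hsub : ∀ a ∈ Icc s₀ s₁, ∀ b ∈ Icc s₀ s₁, a ≤ b →
      Real.arcsin (g b / M) - Real.arcsin (g a / M) ≤ b - a := by
    intro a ha b hb' hab
    have hss : Icc a b ⊆ Icc s₀ s₁ := Icc_subset_Icc ha.1 hb'.2
    refine arcsin_sub_le hM hab (hg.mono hss) ?_ fun s hs => hb s (hss hs)
    filter_upwards [hH] with s hs hm
    exact hs ⟨ha.1.trans_lt hm.1, hm.2.trans_le hb'.2⟩
  have hformula : ∀ s ∈ Icc s₀ s₁, g s = -M * Real.cos (s - s₀) := by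
    intro s hs
    have hl := hsub s₀ (left_mem_Icc.2 hle) s hs hs.1
    have hr := hsub s hs s₁ (right_mem_Icc.2 hle) hs.2
    rw [h0, neg_div, div_self hM.ne', Real.arcsin_neg_one] at hl
    rw [h1, div_self hM.ne', Real.arcsin_one] at hr
    have hang : Real.arcsin (g s / M) = s - s₀ - Real.pi / 2 := by linarith
    obtain ⟨hx, hy⟩ := abs_le.1 (hb s hs)
    have hsin := Real.sin_arcsin (x := g s / M) (by rw [le_div_iff₀ hM]; linarith)
      (by rw [div_le_one hM]; exact hy)
    rw [hang, Real.sin_sub_pi_div_two] at hsin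
    rw [eq_div_iff hM.ne'] at hsin
    linarith
  refine ⟨hformula, fun s hs => ⟨?_, ?_⟩, ?_, ?_⟩
  · have hc : HasDerivAt (fun x => -M * Real.cos (x - s₀)) (M * Real.sin (s - s₀)) s := by
      have h := (((hasDerivAt_id' s).sub_const s₀).cos).const_mul (-M)
      rwa [show -M * (-Real.sin (s - s₀) * 1) = M * Real.sin (s - s₀) by ring] at h
    exact hc.hasDerivWithinAt.congr hformula (hformula s hs)
  · exact mul_nonneg hM.le (Real.sin_nonneg_of_nonneg_of_le_pi (by linarith [hs.1])
      (by linarith [hs.2]))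
  · intro x hx y hy hxy
    rw [hformula x (Ioo_subset_Icc_self hx), hformula y (Ioo_subset_Icc_self hy)]
    have := Real.cos_lt_cos_of_nonneg_of_le_pi (x := x - s₀) (y := y - s₀)
      (by linarith [hx.1]) (by linarith [hy.2]) (by linarith)
    nlinarith
  · intro s hs
    rw [hformula s hs]
    linear_combination M ^ 2 * Real.sin_sq_add_cos_sq (s - s₀)
end

section
/- Let M > 0, a ∈ ℝ, and let g : [a, a + π] → ℝ be a Lipschitz function such that g′(r) ≥ 0 for Lebesgue-almost every r, g(r)² + g′(r)² = M² for Lebesgue-almost every r, and max g = M = −min g on [a, a + π]. Then g(r) = −M·cos(r − a) for every r ∈ [a, a + π]; in particular g is continuously differentiable with g′(r) = M·sin(r − a) for every r. -/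
/-!
The function `θ = arcsin (g / M)` is the phase of the oscillation. The first integral says that
`θ' = 1` wherever `|g| < M`, so `θ` grows at most at unit speed: `θ y - θ x ≤ y - x` for
`x ≤ y` (`arcsin_phase_sub_le`). Since `g` is monotone, it takes the values `-M` and `M` at the two
endpoints, so `θ` increases by exactly `π` over an interval of length `π`; this forces equality
throughout, that is `θ r = r - a - π / 2`, and taking sines gives `g r = -M cos (r - a)`.

Because `arcsin` is not Lipschitz at `±1`, the bound is first proved for `arcsin (s g / M)` with
`0 < s < 1`, a Lipschitz function whose derivative is at most `1` almost everywhere, and then `s` is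
sent to `1`. Both the monotonicity of `g` and this bound come from the fundamental theorem of
calculus for absolutely continuous functions (`monotoneOn_of_ae_deriv_nonneg`).
-/

open MeasureTheory Set
open Real Filter Topology

/-- A Lipschitz function with almost everywhere nonnegative derivative is monotone. Points where
`f` is not differentiable need no exclusion, as `deriv f` vanishes there. -/
lemma monotoneOn_of_ae_deriv_nonneg {f : ℝ → ℝ} {a b : ℝ} {K : NNReal}
    (hf : LipschitzOnWith K f (Icc a b))
    (h : ∀ᵐ x ∂(volume : Measure ℝ), x ∈ Icc a b → 0 ≤ deriv f x) :
    MonotoneOn f (Icc a b) := by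
  intro x hx y hy hxy
  have hsub : Icc x y ⊆ Icc a b := Icc_subset_Icc hx.1 hy.2
  have hac : AbsolutelyContinuousOnInterval f x y := by
    apply LipschitzOnWith.absolutelyContinuousOnInterval (K := K)
    rw [uIcc_of_le hxy]
    exact hf.mono hsub
  have hint := hac.integral_deriv_eq_sub
  have h0 : 0 ≤ ∫ t in x..y, deriv f t := by
    apply intervalIntegral.integral_nonneg_of_ae_restrict hxy
    rw [EventuallyLE, ae_restrict_iff' measurableSet_Icc]
    filter_upwards [h] with t ht htm using ht (hsub htm)
  linarith

/-- For `s < 1` the damped phase `arcsin (s g / M)` grows at most at unit speed. -/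
lemma arcsin_damped_sub_le {M a b s : ℝ} (hM : 0 < M) (hs : 0 < s) (hs1 : s < 1)
    {g : ℝ → ℝ} {K : NNReal} (hg : LipschitzOnWith K g (Icc a b))
    (hbd : ∀ r ∈ Icc a b, g r ∈ Icc (-M) M)
    (hd : ∀ᵐ r ∂(volume : Measure ℝ), r ∈ Icc a b →
      DifferentiableAt ℝ g r ∧ g r ^ 2 + deriv g r ^ 2 = M ^ 2)
    {x y : ℝ} (hx : x ∈ Icc a b) (hy : y ∈ Icc a b) (hxy : x ≤ y) :
    arcsin (s * g y / M) - arcsin (s * g x / M) ≤ y - x := by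
  have hin : ∀ t ∈ Icc (-M) M, -1 < s * t / M ∧ s * t / M < 1 := by
    intro t ht
    rw [lt_div_iff₀ hM, div_lt_iff₀ hM]
    constructor <;> nlinarith [ht.1, ht.2]
  have hφ : ContDiffOn ℝ 1 (fun t : ℝ => arcsin (s * t / M)) (Icc (-M) M) := by
    intro t ht
    have h1 := hin t ht
    have h2 : ContDiffAt ℝ 1 arcsin (s * t / M) := contDiffAt_arcsin h1.1.ne' h1.2.ne
    have h3 : ContDiffAt ℝ 1 (fun t : ℝ => s * t / M) t := by fun_prop
    exact (ContDiffAt.comp t h2 h3).contDiffWithinAt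
  obtain ⟨L, hL⟩ := hφ.exists_lipschitzOnWith (by decide) (convex_Icc _ _) isCompact_Icc
  have hlip := (LipschitzWith.id.lipschitzOnWith (s := Icc a b)).sub (hL.comp hg hbd)
  have hmono := monotoneOn_of_ae_deriv_nonneg hlip (by
    filter_upwards [hd] with r hr hrm
    obtain ⟨hdiff, heq⟩ := hr hrm
    have h1 := hin _ (hbd r hrm)
    have h2 : HasDerivAt (fun r => s * g r / M) (s * deriv g r / M) r :=
      (hdiff.hasDerivAt.const_mul s).div_const M
    have h3 := (hasDerivAt_arcsin h1.1.ne' h1.2.ne).comp r h2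
    have h4 := (hasDerivAt_id r).sub h3
    have h5 : 0 < √(1 - (s * g r / M) ^ 2) := by
      apply Real.sqrt_pos.2
      nlinarith [h1.1, h1.2]
    -- The first integral bounds the derivative: `(s g' / M)² = s² - (s g / M)² < 1 - (s g / M)²`.
    have h6 : s * deriv g r / M ≤ √(1 - (s * g r / M) ^ 2) := by
      apply Real.le_sqrt_of_sq_le
      have : (s * deriv g r / M) ^ 2 + (s * g r / M) ^ 2 = s ^ 2 := by
        field_simp
        linarith
      nlinarith
    refine le_of_le_of_eq ?_ h4.deriv.symm
    rw [sub_nonneg, one_div_mul_eq_div, div_le_one h5]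
    exact h6)
  have := hmono hx hy hxy
  simp only [Function.comp, id] at this
  linarith

/-- The phase `arcsin (g / M)` grows at most at unit speed; obtained by letting the damping factor
of `arcsin_damped_sub_le` tend to `1` from below. -/
lemma arcsin_phase_sub_le {M a b : ℝ} (hM : 0 < M)
    {g : ℝ → ℝ} {K : NNReal} (hg : LipschitzOnWith K g (Icc a b))
    (hbd : ∀ r ∈ Icc a b, g r ∈ Icc (-M) M)
    (hd : ∀ᵐ r ∂(volume : Measure ℝ), r ∈ Icc a b →
      DifferentiableAt ℝ g r ∧ g r ^ 2 + deriv g r ^ 2 = M ^ 2)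
    {x y : ℝ} (hx : x ∈ Icc a b) (hy : y ∈ Icc a b) (hxy : x ≤ y) :
    arcsin (g y / M) - arcsin (g x / M) ≤ y - x := by
  have hc : Continuous fun s : ℝ => arcsin (s * g y / M) - arcsin (s * g x / M) := by
    have := continuous_arcsin
    fun_prop
  have ht := (hc.tendsto 1).mono_left (nhdsWithin_le_nhds (s := Iio 1))
  simp only [one_mul] at ht
  refine le_of_tendsto ht ?_
  filter_upwards [Ioo_mem_nhdsLT (zero_lt_one (α := ℝ))] with s hs
  exact arcsin_damped_sub_le hM hs.1 hs.2 hg hbd hd hx hy hxy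

/-- Corollary 4.3 of the paper: a Lipschitz function `g` on `[a, a + π]` with
`g′ ≥ 0` a.e., first integral `g² + g′² = M²` a.e., and `max g = M = −min g`,
is exactly `g r = -M·cos (r − a)`, with (continuous) derivative `M·sin (r − a)`. -/
theorem stmt_3 (M a : ℝ) (hM : 0 < M)
    (g : ℝ → ℝ) (K : NNReal)
    (hg : LipschitzOnWith K g (Set.Icc a (a + Real.pi)))
    (hderiv : ∀ᵐ r ∂(volume : Measure ℝ), r ∈ Set.Icc a (a + Real.pi) →
      DifferentiableWithinAt ℝ g (Set.Icc a (a + Real.pi)) r →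
        0 ≤ derivWithin g (Set.Icc a (a + Real.pi)) r ∧
        g r ^ 2 + derivWithin g (Set.Icc a (a + Real.pi)) r ^ 2 = M ^ 2)
    (hmax : IsGreatest (g '' Set.Icc a (a + Real.pi)) M)
    (hmin : IsLeast (g '' Set.Icc a (a + Real.pi)) (-M)) :
    (∀ r ∈ Set.Icc a (a + Real.pi), g r = -M * Real.cos (r - a)) ∧
    (∀ r ∈ Set.Icc a (a + Real.pi),
      HasDerivWithinAt g (M * Real.sin (r - a)) (Set.Icc a (a + Real.pi)) r) := by
  have hab : a ≤ a + π := by linarith [pi_pos]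
  have hbd : ∀ r ∈ Icc a (a + π), g r ∈ Icc (-M) M := fun r hr =>
    ⟨hmin.2 (mem_image_of_mem g hr), hmax.2 (mem_image_of_mem g hr)⟩
  have hac : AbsolutelyContinuousOnInterval g a (a + π) := by
    apply LipschitzOnWith.absolutelyContinuousOnInterval (K := K)
    rwa [uIcc_of_le hab]
  have hd : ∀ᵐ r ∂(volume : Measure ℝ), r ∈ Icc a (a + π) →
      DifferentiableAt ℝ g r ∧ 0 ≤ deriv g r ∧ g r ^ 2 + deriv g r ^ 2 = M ^ 2 := by
    have hdiff := hac.ae_differentiableAt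
    rw [uIcc_of_le hab] at hdiff
    filter_upwards [hderiv, hdiff] with r h1 h2 hr
    have h3 := h2 hr
    have h4 := h1 hr h3.differentiableWithinAt
    rw [h3.derivWithin (uniqueDiffOn_Icc (by linarith [pi_pos]) r hr)] at h4
    exact ⟨h3, h4⟩
  have hmono : MonotoneOn g (Icc a (a + π)) := monotoneOn_of_ae_deriv_nonneg hg (by
    filter_upwards [hd] with r h hr using (h hr).2.1)
  have hleft : a ∈ Icc a (a + π) := left_mem_Icc.2 hab
  have hright : a + π ∈ Icc a (a + π) := right_mem_Icc.2 hab
  have hga : g a = -M := by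
    obtain ⟨p, hp, hpe⟩ := hmin.1
    exact le_antisymm (hpe ▸ hmono hleft hp hp.1) (hbd a hleft).1
  have hgb : g (a + π) = M := by
    obtain ⟨p, hp, hpe⟩ := hmax.1
    have h := hmono hp hright hp.2
    rw [hpe] at h
    exact le_antisymm (hbd _ hright).2 h
  have hd' : ∀ᵐ r ∂(volume : Measure ℝ), r ∈ Icc a (a + π) →
      DifferentiableAt ℝ g r ∧ g r ^ 2 + deriv g r ^ 2 = M ^ 2 := by
    filter_upwards [hd] with r h hr using ⟨(h hr).1, (h hr).2.2⟩
  have hform : ∀ r ∈ Icc a (a + π), g r = -M * cos (r - a) := by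
    intro r hr
    have h1 := arcsin_phase_sub_le hM hg hbd hd' hleft hr hr.1
    have h2 := arcsin_phase_sub_le hM hg hbd hd' hr hright hr.2
    rw [hga, neg_div, div_self hM.ne', arcsin_neg_one] at h1
    rw [hgb, div_self hM.ne', arcsin_one] at h2
    have h3 : arcsin (g r / M) = (r - a) - π / 2 := by linarith
    have h4 : sin (arcsin (g r / M)) = g r / M := by
      apply sin_arcsin
      · rw [le_div_iff₀ hM]; linarith [(hbd r hr).1]
      · rw [div_le_iff₀ hM]; linarith [(hbd r hr).2]
    rw [h3, sin_sub_pi_div_two, eq_div_iff hM.ne'] at h4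
    linarith
  refine ⟨hform, fun r hr => ?_⟩
  have h1 : HasDerivAt (fun r => -M * cos (r - a)) (M * sin (r - a)) r := by
    have h := (((hasDerivAt_id r).sub_const a).cos).const_mul (-M)
    exact h.congr_deriv (by simp)
  exact h1.hasDerivWithinAt.congr hform (hform r hr)
end

section
/- Let M > 0, a ∈ ℝ, set b = a + π and h(r) = M·sin(r − a) for r ∈ (a, b), and fix r₀ ∈ (a, b). Then the function β : (a, b) → ℝ defined by β(r) = ∫_{r₀}^{r} h(τ)⁻¹ dτ is a strictly increasing continuous bijection from (a, b) onto ℝ, with β(r) → −∞ as r → a⁺ and β(r) → +∞ as r → b⁻; moreover its inverse φ : ℝ → (a, b) is differentiable with φ′(t) = h(φ(t)) = M·sin(φ(t) − a) for every t ∈ ℝ. -/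
/-!
The function `log (tan ((r - a) / 2)) / M` is an antiderivative of `1 / (M sin (r - a))` on
`(a, a + π)`, so there `β r = (log (tan ((r - a) / 2)) - c) / M` with
`c = log (tan ((r₀ - a) / 2))` (`integral_inv_sin_eq`). Strict monotonicity, continuity and the
endpoint limits are then those of `tan` on `(0, π / 2)` and of `log` on `(0, ∞)`. Solving for `r`
gives the inverse `φ t = a + 2 arctan (exp (M t + c))`, and the equation `φ' = M sin (φ - a)` is
the half-angle identity `sin (2 arctan y) = 2 y / (1 + y ^ 2)`.
-/

open MeasureTheory Set Filter

lemma half_mem {a r : ℝ} (hr : r ∈ Ioo a (a + Real.pi)) :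
    (r - a) / 2 ∈ Ioo 0 (Real.pi / 2) := by
  constructor <;> linarith [hr.1, hr.2]

lemma tan_half_pos {a r : ℝ} (hr : r ∈ Ioo a (a + Real.pi)) : 0 < Real.tan ((r - a) / 2) :=
  Real.tan_pos_of_pos_of_lt_pi_div_two (half_mem hr).1 (half_mem hr).2

lemma sin_sub_pos {a r : ℝ} (hr : r ∈ Ioo a (a + Real.pi)) : 0 < Real.sin (r - a) :=
  Real.sin_pos_of_pos_of_lt_pi (by linarith [hr.1]) (by linarith [hr.2])

lemma hasDerivAt_log_tan_half {M a r : ℝ} (hM : 0 < M) (hr : r ∈ Ioo a (a + Real.pi)) :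
    HasDerivAt (fun r => Real.log (Real.tan ((r - a) / 2)) / M) (M * Real.sin (r - a))⁻¹ r := by
  have hh := half_mem hr
  have hc : 0 < Real.cos ((r - a) / 2) :=
    Real.cos_pos_of_mem_Ioo ⟨by linarith [hh.1, Real.pi_pos], hh.2⟩
  have hs : 0 < Real.sin ((r - a) / 2) :=
    Real.sin_pos_of_pos_of_lt_pi hh.1 (by linarith [hh.2, Real.pi_pos])
  have h1 : HasDerivAt (fun r : ℝ => (r - a) / 2) (1 / 2) r :=
    ((hasDerivAt_id r).sub_const a).div_const 2
  have ht : HasDerivAt (fun r : ℝ => Real.tan ((r - a) / 2))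
      (1 / Real.cos ((r - a) / 2) ^ 2 * (1 / 2)) r :=
    HasDerivAt.comp (h₂ := Real.tan) r (Real.hasDerivAt_tan hc.ne') h1
  have h2 := (ht.log (tan_half_pos hr).ne').div_const M
  refine h2.congr_deriv ?_
  have h3 : Real.sin (r - a) = 2 * Real.sin ((r - a) / 2) * Real.cos ((r - a) / 2) := by
    rw [← Real.sin_two_mul]; congr 1; ring
  rw [h3, Real.tan_eq_sin_div_cos]
  field_simp

lemma integral_inv_sin_eq {M a r₀ r : ℝ} (hM : 0 < M) (hr₀ : r₀ ∈ Ioo a (a + Real.pi))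
    (hr : r ∈ Ioo a (a + Real.pi)) :
    ∫ τ in r₀..r, (M * Real.sin (τ - a))⁻¹ =
      (Real.log (Real.tan ((r - a) / 2)) - Real.log (Real.tan ((r₀ - a) / 2))) / M := by
  have hsub : uIcc r₀ r ⊆ Ioo a (a + Real.pi) := ordConnected_Ioo.uIcc_subset hr₀ hr
  rw [intervalIntegral.integral_eq_sub_of_hasDerivAt
    (fun x hx => hasDerivAt_log_tan_half hM (hsub hx))]
  · ring
  · refine ContinuousOn.intervalIntegrable (ContinuousOn.inv₀ (by fun_prop) fun x hx => ?_)
    exact (mul_pos hM (sin_sub_pos (hsub hx))).ne'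

lemma sin_two_mul_arctan (y : ℝ) : Real.sin (2 * Real.arctan y) = 2 * y / (1 + y ^ 2) := by
  have h : Real.tan (Real.arctan y) * Real.cos (Real.arctan y) = Real.sin (Real.arctan y) :=
    Real.tan_mul_cos (Real.cos_arctan_pos y).ne'
  rw [Real.tan_arctan] at h
  rw [Real.sin_two_mul, ← h, div_eq_mul_inv, ← one_div, ← Real.cos_sq_arctan]
  ring

/-- Reparametrization lemma (Lemma 4.5 of the paper): with `h(r) = M·sin (r − a)` on
`(a, a + π)` and `r₀ ∈ (a, a + π)`, the function `β(r) = ∫_{r₀}^{r} h(τ)⁻¹ dτ` is a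
strictly increasing continuous bijection from `(a, a + π)` onto `ℝ`, tending to `−∞`
at `a⁺` and to `+∞` at `(a + π)⁻`, and its inverse `φ` is differentiable with
`φ′(t) = h(φ(t)) = M·sin (φ(t) − a)`. -/
theorem stmt_4 (M a : ℝ) (hM : 0 < M) (r₀ : ℝ) (hr₀ : r₀ ∈ Set.Ioo a (a + Real.pi))
    (β : ℝ → ℝ)
    (hβ : ∀ r, β r = ∫ τ in r₀..r, (M * Real.sin (τ - a))⁻¹) :
    StrictMonoOn β (Set.Ioo a (a + Real.pi)) ∧
    ContinuousOn β (Set.Ioo a (a + Real.pi)) ∧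
    Set.BijOn β (Set.Ioo a (a + Real.pi)) Set.univ ∧
    Filter.Tendsto β (nhdsWithin a (Set.Ioi a)) Filter.atBot ∧
    Filter.Tendsto β (nhdsWithin (a + Real.pi) (Set.Iio (a + Real.pi))) Filter.atTop ∧
    ∃ φ : ℝ → ℝ,
      (∀ t, φ t ∈ Set.Ioo a (a + Real.pi)) ∧
      (∀ r ∈ Set.Ioo a (a + Real.pi), φ (β r) = r) ∧
      (∀ t, β (φ t) = t) ∧
      (∀ t, HasDerivAt φ (M * Real.sin (φ t - a)) t) := by
  set c := Real.log (Real.tan ((r₀ - a) / 2)) with hc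
  have hform : ∀ r ∈ Ioo a (a + Real.pi), β r = (Real.log (Real.tan ((r - a) / 2)) - c) / M :=
    fun r hr => (hβ r).trans (integral_inv_sin_eq hM hr₀ hr)
  have hmono : StrictMonoOn β (Ioo a (a + Real.pi)) := by
    intro x hx y hy hxy
    rw [hform x hx, hform y hy]
    have ht : Real.tan ((x - a) / 2) < Real.tan ((y - a) / 2) :=
      Real.tan_lt_tan_of_lt_of_lt_pi_div_two
        (by linarith [(half_mem hx).1, Real.pi_pos]) (half_mem hy).2 (by linarith)
    have hl := Real.log_lt_log (tan_half_pos hx) ht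
    gcongr
  have hcont : ContinuousOn β (Ioo a (a + Real.pi)) := by
    have h : ContinuousOn (fun r => Real.log (Real.tan ((r - a) / 2)) / M - c / M)
        (Ioo a (a + Real.pi)) := fun r hr =>
      ((hasDerivAt_log_tan_half hM hr).continuousAt.sub continuousAt_const).continuousWithinAt
    exact h.congr fun r hr => by rw [hform r hr, sub_div]
  let φ : ℝ → ℝ := fun t => a + 2 * Real.arctan (Real.exp (M * t + c))
  have hφmem : ∀ t, φ t ∈ Ioo a (a + Real.pi) := fun t => by
    have h1 := Real.arctan_pos.2 (Real.exp_pos (M * t + c))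
    have h2 := Real.arctan_lt_pi_div_two (Real.exp (M * t + c))
    constructor <;> simp only [φ] <;> linarith
  have hβφ : ∀ t, β (φ t) = t := fun t => by
    have h : (φ t - a) / 2 = Real.arctan (Real.exp (M * t + c)) := by simp only [φ]; ring
    rw [hform _ (hφmem t), h, Real.tan_arctan, Real.log_exp]
    field_simp
    ring
  have hφβ : ∀ r ∈ Ioo a (a + Real.pi), φ (β r) = r := fun r hr =>
    hmono.injOn (hφmem _) hr (hβφ _)
  have hM' : 0 < M⁻¹ := inv_pos.2 hM
  refine ⟨hmono, hcont, ⟨fun _ _ => mem_univ _, hmono.injOn,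
    fun t _ => ⟨φ t, hφmem t, hβφ t⟩⟩, ?_, ?_, φ, hφmem, hφβ, hβφ, ?_⟩
  · have hev : ∀ᶠ r in nhdsWithin a (Ioi a), r ∈ Ioo a (a + Real.pi) :=
      Ioo_mem_nhdsGT (by linarith [Real.pi_pos])
    have ht : Tendsto (fun r => Real.tan ((r - a) / 2)) (nhdsWithin a (Ioi a))
        (nhdsWithin 0 (Ioi 0)) := by
      refine tendsto_nhdsWithin_iff.2 ⟨?_, hev.mono fun r hr => tan_half_pos hr⟩
      have h : ContinuousAt (fun r => Real.tan ((r - a) / 2)) a :=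
        ContinuousAt.comp (f := fun r : ℝ => (r - a) / 2)
          (Real.continuousAt_tan.2 (by simp)) (by fun_prop)
      have h' := h.tendsto
      simp only [sub_self, zero_div, Real.tan_zero] at h'
      exact h'.mono_left nhdsWithin_le_nhds
    have hl := (tendsto_atBot_add_const_right _ (-c)
      (Real.tendsto_log_nhdsGT_zero.comp ht)).atBot_mul_const hM'
    refine hl.congr' (hev.mono fun r hr => ?_)
    rw [hform r hr, div_eq_mul_inv, sub_eq_add_neg, Function.comp_apply]
  · have hev : ∀ᶠ r in nhdsWithin (a + Real.pi) (Iio (a + Real.pi)), r ∈ Ioo a (a + Real.pi) :=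
      Ioo_mem_nhdsLT (by linarith [Real.pi_pos])
    have hx : Tendsto (fun r : ℝ => (r - a) / 2) (nhdsWithin (a + Real.pi) (Iio (a + Real.pi)))
        (nhdsWithin (Real.pi / 2) (Iio (Real.pi / 2))) := by
      refine tendsto_nhdsWithin_iff.2 ⟨?_, hev.mono fun r hr => (half_mem hr).2⟩
      have h : ContinuousAt (fun r : ℝ => (r - a) / 2) (a + Real.pi) := by fun_prop
      have h' := h.tendsto
      simp only [add_sub_cancel_left] at h'
      exact h'.mono_left nhdsWithin_le_nhds
    have hl := (tendsto_atTop_add_const_right _ (-c)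
      (Real.tendsto_log_atTop.comp (Real.tendsto_tan_pi_div_two.comp hx))).atTop_mul_const hM'
    refine hl.congr' (hev.mono fun r hr => ?_)
    rw [hform r hr, div_eq_mul_inv, sub_eq_add_neg]
    rfl
  · intro t
    have h1 : HasDerivAt (fun t : ℝ => M * t + c) (M * 1) t :=
      ((hasDerivAt_id t).const_mul M).add_const c
    have h2 := (h1.exp.arctan.const_mul 2).const_add a
    refine h2.congr_deriv ?_
    have h : φ t - a = 2 * Real.arctan (Real.exp (M * t + c)) := by simp only [φ]; ring
    rw [h, sin_two_mul_arctan]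
    ring
end

section
/- Let ρ : [−π/2, π/2] → ℝ be locally Lipschitz with ρ(x) > 0 for all x, and suppose that for every smooth function v : ℝ → ℝ with compact support contained in (−π/2, π/2) one has ∫_{−π/2}^{π/2} sin(x)·v(x)·ρ(x) dx = ∫_{−π/2}^{π/2} cos(x)·v′(x)·ρ(x) dx (i.e., u(x) = sin x is a weak Neumann eigenfunction with eigenvalue 1 for the weighted measure ρ dx). Then ρ is constant on [−π/2, π/2]. -/
/-! Since `sin x * v x - cos x * v' x = -(cos * v)' x`, the weak equation says
`∫ (cos * v)' ρ = 0` for every test function `v`. A Lipschitz `ρ` is absolutely continuous, so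
integration by parts (the boundary terms vanish with `v`) gives `∫ v * (cos * ρ') = 0`, and the
fundamental lemma of the calculus of variations yields `cos * ρ' = 0` almost everywhere on
`(-π/2, π/2)`. There `cos` is positive, hence `ρ' = 0` almost everywhere, and an absolutely
continuous function with almost everywhere vanishing derivative is constant. -/


open MeasureTheory Set

/-- Computational core of Lemma 4.4 of the paper: if `ρ` is a positive (locally)
Lipschitz weight on `[−π/2, π/2]` for which `u(x) = sin x` is a weak Neumann
eigenfunction with eigenvalue `1`, i.e.
`∫ sin x · v x · ρ x dx = ∫ cos x · v′ x · ρ x dx` for every smooth `v` with compact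
support in `(−π/2, π/2)`, then `ρ` is constant on `[−π/2, π/2]`. -/
theorem stmt_5 (ρ : ℝ → ℝ) (K : NNReal)
    (hρ : LipschitzOnWith K ρ (Set.Icc (-(Real.pi / 2)) (Real.pi / 2)))
    (hpos : ∀ x ∈ Set.Icc (-(Real.pi / 2)) (Real.pi / 2), 0 < ρ x)
    (hweak : ∀ v : ℝ → ℝ, ContDiff ℝ (⊤ : ℕ∞) v → HasCompactSupport v →
      tsupport v ⊆ Set.Ioo (-(Real.pi / 2)) (Real.pi / 2) →
      (∫ x in (-(Real.pi / 2))..(Real.pi / 2), Real.sin x * v x * ρ x) =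
        (∫ x in (-(Real.pi / 2))..(Real.pi / 2), Real.cos x * deriv v x * ρ x)) :
    ∀ x ∈ Set.Icc (-(Real.pi / 2)) (Real.pi / 2),
      ∀ y ∈ Set.Icc (-(Real.pi / 2)) (Real.pi / 2), ρ x = ρ y := by
  set a : ℝ := -(Real.pi / 2) with ha
  set b : ℝ := Real.pi / 2 with hb
  have hab : a ≤ b := by have := Real.pi_pos; linarith
  have hac : AbsolutelyContinuousOnInterval ρ a b := by
    apply LipschitzOnWith.absolutelyContinuousOnInterval (K := K)
    rwa [uIcc_of_le hab]
  have hint : IntervalIntegrable (fun x => Real.cos x * deriv ρ x) volume a b :=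
    hac.intervalIntegrable_deriv.continuousOn_mul Real.continuous_cos.continuousOn
  have hcρ : ContinuousOn ρ (uIcc a b) := hac.continuousOn
  have hae : ∀ᵐ x : ℝ, x ∈ Ioo a b → Real.cos x * deriv ρ x = 0 := by
    refine isOpen_Ioo.ae_eq_zero_of_integral_contDiff_smul_eq_zero
      ((intervalIntegrable_iff_integrableOn_Ioo_of_le hab).1 hint).locallyIntegrableOn ?_
    intro v hv hvc hvs
    have hv0 : ∀ x, x ∉ Ioo a b → v x = 0 := fun x hx =>
      image_eq_zero_of_notMem_tsupport fun h => hx (hvs h)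
    have hva : v a = 0 := hv0 a (by simp)
    have hvb : v b = 0 := hv0 b (by simp)
    have hvd : Differentiable ℝ v := hv.differentiable (by simp)
    have hv' : Continuous (deriv v) := hv.continuous_deriv (by simp)
    have hg : ContDiff ℝ 1 (fun x => Real.cos x * v x) :=
      Real.contDiff_cos.mul (hv.of_le (by exact_mod_cast le_top))
    have hgd : ∀ x, deriv (fun x => Real.cos x * v x) x
        = Real.cos x * deriv v x - Real.sin x * v x := by
      intro x
      rw [((Real.hasDerivAt_cos x).fun_mul (hvd x).hasDerivAt).deriv]
      ring
    have hparts := (hg.contDiffOn.absolutelyContinuousOnInterval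
      (a := a) (b := b)).integral_mul_deriv_eq_deriv_mul hac
    have hzero : ∫ x in a..b, deriv (fun x => Real.cos x * v x) x * ρ x = 0 := by
      simp only [hgd, sub_mul]
      rw [intervalIntegral.integral_sub, hweak v hv hvc hvs, sub_self]
      · exact ((Real.continuous_cos.mul hv').continuousOn.mul hcρ).intervalIntegrable
      · exact ((Real.continuous_sin.mul hv.continuous).continuousOn.mul hcρ).intervalIntegrable
    rw [hzero, hva, hvb] at hparts
    calc ∫ x, v x • (Real.cos x * deriv ρ x)
        = ∫ x in Ioc a b, v x • (Real.cos x * deriv ρ x) := by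
          refine (setIntegral_eq_integral_of_forall_compl_eq_zero fun x hx => ?_).symm
          rw [hv0 x fun h => hx (Ioo_subset_Ioc_self h), zero_smul]
      _ = ∫ x in a..b, Real.cos x * v x * deriv ρ x := by
          rw [intervalIntegral.integral_of_le hab]
          congr 1
          ext x
          rw [smul_eq_mul]
          ring
      _ = 0 := by simpa using hparts
  have hderiv : ∀ᵐ x : ℝ, x ∈ uIcc a b → HasDerivAt ρ 0 x := by
    -- The endpoints, where `cos` vanishes, form a null set.
    filter_upwards [hae, hac.ae_differentiableAt, Measure.ae_ne volume a,
      Measure.ae_ne volume b] with x hx hd hxa hxb hxI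
    have hI : x ∈ Icc a b := by rwa [uIcc_of_le hab] at hxI
    have hO : x ∈ Ioo a b := ⟨lt_of_le_of_ne hI.1 hxa.symm, lt_of_le_of_ne hI.2 hxb⟩
    have h0 : deriv ρ x = 0 :=
      (mul_eq_zero.1 (hx hO)).resolve_left (Real.cos_pos_of_mem_Ioo hO).ne'
    exact h0 ▸ (hd hxI).hasDerivAt
  obtain ⟨C, hC⟩ := hac.const_of_ae_hasDerivAt_zero hderiv
  rw [uIcc_of_le hab] at hC
  intro x hx y hy
  rw [hC x hx, hC y hy]
end

section
/- Let N ∈ (1, ∞) and let ρ : [−π/2, π/2] → (0, ∞) be locally Lipschitz such that x ↦ ρ(x)^{1/(N−1)} is concave on (−π/2, π/2). If the first nonzero Neumann eigenvalue λ₁(ρ) of the weighted interval, defined as the infimum of the weighted Neumann Rayleigh quotient over all nonzero Lipschitz functions u : [−π/2, π/2] → ℝ with ∫_{−π/2}^{π/2} u ρ dx = 0, is equal to 1, then ρ is constant on [−π/2, π/2]. -/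
open MeasureTheory Set

/-!
Write `ρ = exp h`. Since `log` is increasing and concave, `h` is concave, so its derivative is a.e.
equal to an antitone function `M` (`exists_M`). If `M` vanishes identically inside the interval, `ρ`
is constant. Otherwise the first eigenvalue is strictly larger than `1`, for the following reasons.

By duality, the Neumann eigenvalue of the weight `exp h` is at least the Dirichlet eigenvalue of the
weight `exp (-h)`: if `u` has weighted mean zero, use its weighted primitive as a test function
(`gap`). Substituting `v = F * exp (-h / 2)`, the Dirichlet problem becomes a Schrödinger problem
with potential `M ^ 2 / 4 - M' / 2`. The measure `-M'` is nonnegative and is discarded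
(`antitone_ibp`), so it is enough to have a function `T` with
`lam ≤ -T' - T ^ 2 + M ^ 2 / 4` and `lam > 1` (`core`).
With `M = 0` the function `T = -tan`, the logarithmic derivative of the ground state `cos`, gives
exactly `lam = 1`. If `M x₀ ≠ 0`, then by monotonicity `M ^ 2 ≥ M x₀ ^ 2` on one whole side of
`x₀`, and a perturbation of `-tan` turns this gain on a part of the interval into a constant
`lam > 1` on all of it (`exists_riccati`).
-/

/-! ### Closure properties of Lipschitz functions -/

lemma lip_of_hasDerivAt {a b : ℝ} {f f' : ℝ → ℝ}
    (hf : ∀ x ∈ Icc a b, HasDerivAt f (f' x) x) (hf' : ContinuousOn f' (Icc a b)) :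
    ∃ K, LipschitzOnWith K f (Icc a b) := by
  obtain ⟨C, hC⟩ := isCompact_Icc.exists_bound_of_continuousOn hf'
  refine ⟨C.toNNReal, (convex_Icc a b).lipschitzOnWith_of_nnnorm_hasDerivWithin_le
    (fun x hx => (hf x hx).hasDerivWithinAt) fun x hx => ?_⟩
  rw [← NNReal.coe_le_coe]
  exact (hC x hx).trans (Real.le_coe_toNNReal C)

lemma lip_mul {a b : ℝ} {f g : ℝ → ℝ} (hf : ∃ K, LipschitzOnWith K f (Icc a b))
    (hg : ∃ K, LipschitzOnWith K g (Icc a b)) :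
    ∃ K, LipschitzOnWith K (fun x => f x * g x) (Icc a b) := by
  obtain ⟨K, hK⟩ := hf
  obtain ⟨L, hL⟩ := hg
  obtain ⟨C, hC⟩ := isCompact_Icc.exists_bound_of_continuousOn hK.continuousOn
  obtain ⟨D, hD⟩ := isCompact_Icc.exists_bound_of_continuousOn hL.continuousOn
  refine ⟨(C * L + D * K).toNNReal, LipschitzOnWith.of_dist_le_mul fun x hx y hy => ?_⟩
  have h1 := hK.dist_le_mul x hx y hy
  have h2 := hL.dist_le_mul x hx y hy
  have hCx := hC x hx
  have hDy := hD y hy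
  rw [Real.dist_eq, Real.dist_eq] at h1 h2
  rw [Real.dist_eq, Real.dist_eq]
  rw [Real.norm_eq_abs] at hCx hDy
  have hC0 : 0 ≤ C := (abs_nonneg _).trans hCx
  have hD0 : 0 ≤ D := (abs_nonneg _).trans hDy
  have : f x * g x - f y * g y = f x * (g x - g y) + g y * (f x - f y) := by ring
  rw [this]
  calc _ ≤ |f x| * |g x - g y| + |g y| * |f x - f y| := by
        rw [← abs_mul, ← abs_mul]; exact abs_add_le _ _
    _ ≤ C * (L * |x - y|) + D * (K * |x - y|) := by gcongr
    _ = (C * L + D * K) * |x - y| := by ring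
    _ ≤ _ := by gcongr; exact Real.le_coe_toNNReal _

lemma lip_comp {a b c d : ℝ} {f φ : ℝ → ℝ} (hf : ∃ K, LipschitzOnWith K f (Icc a b))
    (hm : MapsTo f (Icc a b) (Icc c d)) (hφ : ∃ K, LipschitzOnWith K φ (Icc c d)) :
    ∃ K, LipschitzOnWith K (fun x => φ (f x)) (Icc a b) := by
  obtain ⟨K, hK⟩ := hf
  obtain ⟨L, hL⟩ := hφ
  exact ⟨L * K, hL.comp hK hm⟩

/-! ### A strict Riccati supersolution -/

/-- `S = -tan` solves `-S' - S ^ 2 = 1` on `(-π/2, π/2)`. If on top of this a constant `c > 0` is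
gained to the left of `a`, the value `1` can be improved to some `lam > 1` on the whole interval,
by a function `T` that is `C¹` up to the end points. It has the form `T x = α * S (α * x)` with
`S y = -tan y + ε * exp (-B y) * cos y`: the correction improves the equation strictly on
`[a, π/2)` and spoils it by at most `c / 2` elsewhere, and the dilation by `α < 1`, which costs a
factor `α ^ 2`, moves the poles of `tan` off the closed interval. -/
lemma exists_riccati {a c : ℝ} (ha : -(Real.pi / 2) < a) (ha0 : a < 0) (hc : 0 < c) :
    ∃ lam : ℝ, 1 < lam ∧ ∃ T T' : ℝ → ℝ,
      (∀ x ∈ Icc (-(Real.pi / 2)) (Real.pi / 2), HasDerivAt T (T' x) x) ∧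
      ContinuousOn T' (Icc (-(Real.pi / 2)) (Real.pi / 2)) ∧
      (∀ x ∈ Icc (-(Real.pi / 2)) (Real.pi / 2), a ≤ x → lam ≤ -T' x - T x ^ 2) ∧
      (∀ x ∈ Icc (-(Real.pi / 2)) (Real.pi / 2), lam ≤ -T' x - T x ^ 2 + c) := by
  have hpi := Real.pi_pos
  have hca : 0 < Real.cos a := Real.cos_pos_of_mem_Ioo ⟨ha, by linarith⟩
  have hca1 : Real.cos a ≤ 1 := Real.cos_le_one a
  -- `B` makes `(B - 1) * cos a = 4`, so that `(B - 1) * cos y + 3 * sin y ≥ 1` on `[a, 0]`.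
  set B : ℝ := 1 + 4 / Real.cos a with hB
  have hB4 : 4 ≤ B - 1 := by
    rw [hB, add_sub_cancel_left, le_div_iff₀ hca]; linarith
  set E : ℝ := Real.exp (B * (Real.pi / 2)) with hE
  have hE0 : 0 < E := Real.exp_pos _
  -- `E` bounds `exp (-B y)` above and `1 / E` bounds it below, so `ε * exp (-B y) ≤ min 1 (c / 6)`.
  set ε : ℝ := min 1 (c / 6) / E with hε
  have hε0 : 0 < ε := by positivity
  have hεE : ε * E = min 1 (c / 6) := by rw [hε]; field_simp
  have hεE1 : ε * E ≤ 1 := hεE ▸ min_le_left _ _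
  have hεEc : ε * E ≤ c / 6 := hεE ▸ min_le_right _ _
  have hδ0 : 0 < ε / E := by positivity
  set S : ℝ → ℝ := fun y => -Real.tan y + ε * (Real.exp (-(B * y)) * Real.cos y) with hS
  set S' : ℝ → ℝ := fun y => -(1 / Real.cos y ^ 2) +
    ε * (Real.exp (-(B * y)) * (-B) * Real.cos y + Real.exp (-(B * y)) * (-Real.sin y)) with hS'
  have key : ∀ y ∈ Ioo (-(Real.pi / 2)) (Real.pi / 2), -S' y - S y ^ 2 =
      1 + ε * Real.exp (-(B * y)) * (B * Real.cos y + 3 * Real.sin y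
        - ε * Real.exp (-(B * y)) * Real.cos y ^ 2) := by
    intro y hy
    have hC : 0 < Real.cos y := Real.cos_pos_of_mem_Ioo hy
    have h1 := Real.sin_sq_add_cos_sq y
    simp only [hS, hS', Real.tan_eq_sin_div_cos]
    field_simp
    linear_combination -h1
  have hexp : ∀ y ∈ Ioo (-(Real.pi / 2)) (Real.pi / 2),
      1 / E ≤ Real.exp (-(B * y)) ∧ Real.exp (-(B * y)) ≤ E := by
    intro y hy
    rw [one_div, hE, ← Real.exp_neg]
    exact ⟨Real.exp_le_exp.2 (by nlinarith [hy.2]), Real.exp_le_exp.2 (by nlinarith [hy.1])⟩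
  have hbr : ∀ y ∈ Ioo (-(Real.pi / 2)) (Real.pi / 2), (B - 1) * Real.cos y + 3 * Real.sin y ≤
      B * Real.cos y + 3 * Real.sin y - ε * Real.exp (-(B * y)) * Real.cos y ^ 2 := by
    intro y hy
    have hC : 0 < Real.cos y := Real.cos_pos_of_mem_Ioo hy
    have h1 : ε * Real.exp (-(B * y)) ≤ 1 :=
      (mul_le_mul_of_nonneg_left (hexp y hy).2 hε0.le).trans hεE1
    have h2 : Real.cos y ^ 2 ≤ Real.cos y := by nlinarith [Real.cos_le_one y]
    have h3 : ε * Real.exp (-(B * y)) * Real.cos y ^ 2 ≤ 1 * Real.cos y := by gcongr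
    linarith
  have hright : ∀ y ∈ Ioo (-(Real.pi / 2)) (Real.pi / 2), a ≤ y →
      1 + ε / E ≤ -S' y - S y ^ 2 := by
    intro y hy hay
    have hC : 0 < Real.cos y := Real.cos_pos_of_mem_Ioo hy
    have h1 : 1 ≤ (B - 1) * Real.cos y + 3 * Real.sin y := by
      rcases le_total y 0 with h | h
      · have h2 : Real.cos a ≤ Real.cos y := by
          rw [← Real.cos_neg a, ← Real.cos_neg y]
          exact Real.cos_le_cos_of_nonneg_of_le_pi (by linarith) (by linarith) (by linarith)
        have h3 : (B - 1) * Real.cos a = 4 := by rw [hB]; field_simp; ring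
        nlinarith [Real.neg_one_le_sin y]
      · have h2 : 0 ≤ Real.sin y := Real.sin_nonneg_of_nonneg_of_le_pi h (by linarith [hy.2])
        have h3 : 1 ≤ Real.cos y + Real.sin y := by
          nlinarith [Real.sin_sq_add_cos_sq y, mul_nonneg h2 hC.le]
        nlinarith [mul_le_mul_of_nonneg_right hB4 hC.le]
    rw [key y hy, div_eq_mul_one_div]
    have := mul_le_mul (mul_le_mul_of_nonneg_left (hexp y hy).1 hε0.le) (h1.trans (hbr y hy))
      zero_le_one (by positivity)
    linarith
  have hall : ∀ y ∈ Ioo (-(Real.pi / 2)) (Real.pi / 2), 1 - c / 2 ≤ -S' y - S y ^ 2 := by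
    intro y hy
    have hC : 0 < Real.cos y := Real.cos_pos_of_mem_Ioo hy
    have h0 : 0 < ε * Real.exp (-(B * y)) := by positivity
    have h1 : ε * Real.exp (-(B * y)) ≤ c / 6 :=
      (mul_le_mul_of_nonneg_left (hexp y hy).2 hε0.le).trans hεEc
    rw [key y hy]
    have h2 := hbr y hy
    have h3 : -3 ≤ (B - 1) * Real.cos y + 3 * Real.sin y := by
      nlinarith [Real.neg_one_le_sin y]
    have := mul_le_mul_of_nonneg_left (h3.trans h2) h0.le
    linarith
  -- `δ` is below both gains (`ε / E` right of `a`, `c / 2` left of it), and `1 - α` is small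
  -- enough in terms of `δ` that the factor `α ^ 2` does not use the gain up.
  set δ : ℝ := min 1 (min (ε / E) (c / 2)) with hδ
  have hδp : 0 < δ := by positivity
  have hδ1 : δ ≤ 1 := min_le_left _ _
  have hδ2 : δ ≤ ε / E := (min_le_right _ _).trans (min_le_left _ _)
  have hδ3 : δ ≤ c / 2 := (min_le_right _ _).trans (min_le_right _ _)
  set α : ℝ := 1 - δ / 4 with hα
  have hα0 : 0 < α := by linarith
  have hα1 : α < 1 := by linarith
  have hmem : ∀ x ∈ Icc (-(Real.pi / 2)) (Real.pi / 2),
      α * x ∈ Ioo (-(Real.pi / 2)) (Real.pi / 2) := by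
    intro x hx
    constructor <;> nlinarith [hx.1, hx.2]
  have hlam : 1 < α ^ 2 * (1 + δ) := by
    have h1 : α ^ 2 * (1 + δ) = 1 + δ * (1 - δ) / 2 + δ ^ 2 / 16 + δ ^ 3 / 16 := by
      rw [hα]; ring
    have h2 : 0 ≤ δ * (1 - δ) := mul_nonneg hδp.le (by linarith)
    rw [h1]
    linarith [pow_pos hδp 2, pow_pos hδp 3]
  refine ⟨α ^ 2 * (1 + δ), hlam, fun x => α * S (α * x),
    fun x => α * (S' (α * x) * α), ?_, ?_, ?_, ?_⟩
  · intro x hx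
    have hC : 0 < Real.cos (α * x) := Real.cos_pos_of_mem_Ioo (hmem x hx)
    have h1 : HasDerivAt S (S' (α * x)) (α * x) := by
      have he : HasDerivAt (fun y => Real.exp (-(B * y)))
          (Real.exp (-(B * (α * x))) * (-B)) (α * x) := by
        simpa using (((hasDerivAt_id (α * x)).const_mul B).neg).exp
      exact (Real.hasDerivAt_tan hC.ne').neg.add ((he.mul (Real.hasDerivAt_cos _)).const_mul ε)
    have h2 : HasDerivAt (fun x => α * x) α x := by simpa using (hasDerivAt_id x).const_mul α
    exact (h1.comp x h2).const_mul α
  · have : ∀ x ∈ Icc (-(Real.pi / 2)) (Real.pi / 2), Real.cos (α * x) ^ 2 ≠ 0 := fun x hx =>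
      pow_ne_zero _ (Real.cos_pos_of_mem_Ioo (hmem x hx)).ne'
    simp only [hS']
    fun_prop (disch := assumption)
  · intro x hx hax
    -- `a < 0` and `α < 1`, so `a ≤ x` gives `a ≤ α * x`.
    have h1 := hright _ (hmem x hx) (by nlinarith)
    have h2 := mul_le_mul_of_nonneg_left (h1.trans' (add_le_add_right hδ2 1)) (sq_nonneg α)
    linarith
  · intro x hx
    have h2 := mul_le_mul_of_nonneg_left (hall _ (hmem x hx)) (sq_nonneg α)
    have h3 : α ^ 2 ≤ 1 := by nlinarith
    nlinarith

/-! ### Integration of Lipschitz functions -/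

lemma lip_deriv_bound {a b : ℝ} {f : ℝ → ℝ} {K : NNReal} (hf : LipschitzOnWith K f (Icc a b))
    {x : ℝ} (hx : x ∈ Ioo a b) : |deriv f x| ≤ K := by
  simpa using norm_deriv_le_of_lipschitzOn (Icc_mem_nhds hx.1 hx.2) hf

lemma lip_ac {a b : ℝ} (hab : a ≤ b) {f : ℝ → ℝ} (hf : ∃ K, LipschitzOnWith K f (Icc a b)) :
    AbsolutelyContinuousOnInterval f a b := by
  obtain ⟨K, hK⟩ := hf
  rw [← uIcc_of_le hab] at hK
  exact hK.absolutelyContinuousOnInterval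

lemma lip_cont {a b : ℝ} {f : ℝ → ℝ} (hf : ∃ K, LipschitzOnWith K f (Icc a b)) :
    ContinuousOn f (Icc a b) := hf.elim fun _ h => h.continuousOn

lemma integral_mono_Ioo {a b : ℝ} (hab : a ≤ b) {f g : ℝ → ℝ}
    (hf : IntervalIntegrable f volume a b) (hg : IntervalIntegrable g volume a b)
    (h : ∀ᵐ x, x ∈ Ioo a b → f x ≤ g x) : ∫ x in a..b, f x ≤ ∫ x in a..b, g x := by
  refine intervalIntegral.integral_mono_ae_restrict hab hf hg ?_
  rw [← restrict_Ioo_eq_restrict_Icc, Filter.EventuallyLE, ae_restrict_iff' measurableSet_Ioo]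
  exact h

lemma integrable_deriv_mul_deriv {a b : ℝ} (hab : a ≤ b) {f g : ℝ → ℝ}
    (hf : ∃ K, LipschitzOnWith K f (Icc a b)) (hg : IntervalIntegrable g volume a b) :
    IntervalIntegrable (fun x => deriv f x * g x) volume a b := by
  obtain ⟨K, hK⟩ := hf
  rw [intervalIntegrable_iff_integrableOn_Ioo_of_le hab] at hg ⊢
  refine Integrable.bdd_mul (c := K) hg (measurable_deriv f).aestronglyMeasurable ?_
  filter_upwards [self_mem_ae_restrict measurableSet_Ioo] with x hx
  exact lip_deriv_bound hK hx

lemma integrable_antitone_mul {a b : ℝ} (hab : a ≤ b) {M g : ℝ → ℝ}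
    (hM : Antitone M) (hg : IntervalIntegrable g volume a b) :
    IntervalIntegrable (fun x => M x * g x) volume a b := by
  rw [intervalIntegrable_iff_integrableOn_Ioo_of_le hab] at hg ⊢
  refine Integrable.bdd_mul (c := max |M a| |M b|) hg hM.measurable.aestronglyMeasurable ?_
  filter_upwards [self_mem_ae_restrict measurableSet_Ioo] with x hx
  rw [Real.norm_eq_abs, max_comm]
  exact abs_le_max_abs_abs (hM hx.2.le) (hM hx.1.le)

/-! ### Integration by parts against a monotone function -/

/-- One subinterval of the integration by parts in `antitone_ibp`: replacing `M` by its minimum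
`M y` costs an error which telescopes when summed over consecutive subintervals of the same
length. -/
lemma antitone_step {x y : ℝ} (hxy : x ≤ y) {M G : ℝ → ℝ} {L : NNReal} (hM : Antitone M)
    (hG : LipschitzOnWith L G (Icc x y)) (hx : 0 ≤ G x) :
    M y * G y - M x * G x - (M x - M y) * L * (y - x) ≤ ∫ t in x..y, M t * deriv G t := by
  have hac := lip_ac hxy ⟨L, hG⟩
  have h1 := hac.intervalIntegrable_deriv
  have h2 : ∫ t in x..y, (M y * deriv G t - (M x - M y) * L) ≤ ∫ t in x..y, M t * deriv G t := by
    refine integral_mono_Ioo hxy ((h1.const_mul _).sub (by simp))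
      (integrable_antitone_mul hxy hM h1) (ae_of_all _ fun t ht => ?_)
    -- `(M t - M y) * (deriv G t + L) ≥ 0` since `|deriv G t| ≤ L`.
    have h3 := abs_le.1 (lip_deriv_bound hG ht)
    have h4 : M y ≤ M t := hM ht.2.le
    have h5 : M t ≤ M x := hM ht.1.le
    have h6 : (M t - M y) * L ≤ (M x - M y) * L := by gcongr
    nlinarith [mul_nonneg (sub_nonneg.2 h4) (by linarith : 0 ≤ L + deriv G t)]
  rw [intervalIntegral.integral_sub (h1.const_mul _) (by simp),
    intervalIntegral.integral_const_mul, hac.integral_deriv_eq_sub,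
    intervalIntegral.integral_const] at h2
  have h7 : 0 ≤ (M x - M y) * G x := mul_nonneg (sub_nonneg.2 (hM hxy)) hx
  simp only [smul_eq_mul] at h2
  linarith

/-- Formally, `∫ M G' = -∫ G dM ≥ 0` for `G ≥ 0` vanishing at the end points, as `dM ≤ 0`.
Stieltjes integration is avoided: on a subdivision into `n` equal parts, summing `antitone_step`
gives the bound `-(M a - M b) * L * (b - a) / n`, and `n → ∞`. -/
lemma antitone_ibp {a b : ℝ} (hab : a ≤ b) {M G : ℝ → ℝ} (hM : Antitone M)
    (hG : ∃ K, LipschitzOnWith K G (Icc a b)) (hG0 : ∀ x ∈ Icc a b, 0 ≤ G x)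
    (hGa : G a = 0) (hGb : G b = 0) : 0 ≤ ∫ t in a..b, M t * deriv G t := by
  obtain ⟨L, hL⟩ := hG
  have hint := integrable_antitone_mul hab hM (lip_ac hab ⟨L, hL⟩).intervalIntegrable_deriv
  have main : ∀ n : ℕ, 0 < n →
      -((M a - M b) * L * (b - a)) * (1 / n) ≤ ∫ t in a..b, M t * deriv G t := by
    intro n hn
    have hn' : (0 : ℝ) < n := by exact_mod_cast hn
    set d : ℝ := (b - a) / n with hd
    have hd0 : 0 ≤ d := div_nonneg (sub_nonneg.2 hab) hn'.le
    have hnd : n * d = b - a := by rw [hd]; field_simp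
    have hle : ∀ k : ℕ, k ≤ n → a + k * d ≤ b := by
      intro k hk
      have : (k : ℝ) * d ≤ n * d := by gcongr
      linarith
    have hge : ∀ k : ℕ, a ≤ a + k * d := fun k => le_add_of_nonneg_right (by positivity)
    have step : ∀ k : ℕ, k ≤ n →
        M (a + k * d) * G (a + k * d) - (M a - M (a + k * d)) * L * d ≤
          ∫ t in a..(a + k * d), M t * deriv G t := by
      intro k
      induction k with
      | zero => intro _; simp [hGa]
      | succ k ih =>
        intro hk
        have h1 := ih (by omega)
        have hxy : a + k * d ≤ a + (k + 1 : ℕ) * d := by push_cast; linarith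
        have hsub : Icc (a + k * d) (a + (k + 1 : ℕ) * d) ⊆ Icc a b :=
          Icc_subset_Icc (hge k) (hle _ hk)
        have h2 := antitone_step hxy hM (hL.mono hsub) (hG0 _ (hsub (left_mem_Icc.2 hxy)))
        have h3 : a + (k + 1 : ℕ) * d - (a + k * d) = d := by push_cast; ring
        rw [h3] at h2
        rw [← intervalIntegral.integral_add_adjacent_intervals
          (b := a + k * d) (hint.mono_set ?_) (hint.mono_set ?_)]
        · linarith
        · rw [uIcc_of_le (hge k), uIcc_of_le hab]
          exact Icc_subset_Icc le_rfl (hle k (by omega))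
        · rwa [uIcc_of_le hxy, uIcc_of_le hab]
    have h := step n le_rfl
    rw [hnd, add_sub_cancel, hGb] at h
    have : -((M a - M b) * L * (b - a)) * (1 / n) = - ((M a - M b) * L * d) := by
      rw [hd]; ring
    linarith
  have hlim := (tendsto_one_div_add_atTop_nhds_zero_nat (𝕜 := ℝ)).const_mul
    (-((M a - M b) * L * (b - a)))
  rw [mul_zero] at hlim
  refine le_of_tendsto' hlim fun n => ?_
  have := main (n + 1) n.succ_pos
  push_cast at this
  exact this

/-! ### From the Riccati inequality to the spectral gap -/

/-- Dirichlet inequality for the dual weight `exp (-h)`: a function `T` with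
`lam ≤ -T' - T ^ 2 + (h') ^ 2 / 4` bounds the first Dirichlet eigenvalue from below by `lam`,
when `h'` is a.e. equal to an antitone function `M`.
With `v = F * exp (-h / 2)` and `G = v ^ 2`, one has a.e.
`F' ^ 2 * exp (-h) = (v' + M v / 2) ^ 2 ≥ (T G)' + M G' / 2 + lam * G`;
the first term integrates to `0`, the second to something nonnegative. -/
lemma core {a b : ℝ} (hab : a ≤ b) {h M T T' F : ℝ → ℝ} {lam : ℝ}
    (hh : ∃ K, LipschitzOnWith K h (Icc a b)) (hM : Antitone M)
    (hhM : ∀ x ∈ Ioo a b, DifferentiableAt ℝ h x → deriv h x = M x)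
    (hT : ∀ x ∈ Icc a b, HasDerivAt T (T' x) x) (hT' : ContinuousOn T' (Icc a b))
    (hlam : ∀ x ∈ Ioo a b, lam ≤ -T' x - T x ^ 2 + M x ^ 2 / 4)
    (hF : ∃ K, LipschitzOnWith K F (Icc a b)) (hFa : F a = 0) (hFb : F b = 0) :
    lam * ∫ x in a..b, F x ^ 2 * Real.exp (-h x) ≤
      ∫ x in a..b, deriv F x ^ 2 * Real.exp (-h x) := by
  set w : ℝ → ℝ := fun x => Real.exp (-(1 / 2) * h x) with hw
  set v : ℝ → ℝ := fun x => F x * w x with hv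
  set G : ℝ → ℝ := fun x => v x * v x with hG
  have hwL : ∃ K, LipschitzOnWith K w (Icc a b) := by
    obtain ⟨C, hC⟩ := isCompact_Icc.exists_bound_of_continuousOn (lip_cont hh)
    refine lip_comp (c := -C) (d := C) (φ := fun t => Real.exp (-(1 / 2) * t)) hh
      (fun x hx => abs_le.1 (hC x hx)) ?_
    refine lip_of_hasDerivAt (f' := fun t => Real.exp (-(1 / 2) * t) * (-(1 / 2)))
      (fun t _ => ?_) (by fun_prop)
    simpa using ((hasDerivAt_id t).const_mul (-(1 / 2) : ℝ)).exp
  have hvL := lip_mul hF hwL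
  have hGL := lip_mul hvL hvL
  have hTL := lip_of_hasDerivAt hT hT'
  have hTGL := lip_mul hTL hGL
  have hGa : G a = 0 := by simp [hG, hv, hFa]
  have hGb : G b = 0 := by simp [hG, hv, hFb]
  have hGw : ∀ x, G x = F x ^ 2 * Real.exp (-h x) := by
    intro x
    have : Real.exp (-h x) = w x * w x := by rw [hw, ← Real.exp_add]; ring_nf
    rw [this]; simp only [hG, hv]; ring
  have hTG0 : ∫ x in a..b, deriv (fun x => T x * G x) x = 0 := by
    rw [(lip_ac hab hTGL).integral_deriv_eq_sub]
    change T b * G b - T a * G a = 0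
    rw [hGa, hGb]; ring
  have hMG0 : 0 ≤ ∫ x in a..b, M x * deriv G x :=
    antitone_ibp hab hM hGL (fun x _ => mul_self_nonneg _) hGa hGb
  have i1 := (lip_ac hab hTGL).intervalIntegrable_deriv
  have i2 := integrable_antitone_mul hab hM (lip_ac hab hGL).intervalIntegrable_deriv
  have i3 : IntervalIntegrable G volume a b := by
    refine ContinuousOn.intervalIntegrable ?_
    rw [uIcc_of_le hab]
    exact lip_cont hGL
  have i4 : IntervalIntegrable (fun x => deriv F x ^ 2 * Real.exp (-h x)) volume a b := by
    have e1 : ContinuousOn (fun x => Real.exp (-h x)) (uIcc a b) := by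
      rw [uIcc_of_le hab]
      exact (lip_cont hh).neg.rexp
    have := integrable_deriv_mul_deriv hab hF
      (integrable_deriv_mul_deriv hab hF e1.intervalIntegrable)
    refine this.congr (fun x _ => ?_)
    ring
  have hpt : ∀ᵐ x, x ∈ Ioo a b → deriv (fun x => T x * G x) x + 1 / 2 * (M x * deriv G x)
      + lam * G x ≤ deriv F x ^ 2 * Real.exp (-h x) := by
    filter_upwards [(lip_ac hab hF).ae_differentiableAt, (lip_ac hab hh).ae_differentiableAt]
      with x hFx hhx hx
    have hxI := Ioo_subset_Icc_self hx
    rw [uIcc_of_le hab] at hFx hhx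
    have dF := (hFx hxI).hasDerivAt
    have dh := (hhx hxI).hasDerivAt
    rw [hhM x hx (hhx hxI)] at dh
    have dw : HasDerivAt w (w x * (-(1 / 2) * M x)) x := (dh.const_mul _).exp
    have dv : HasDerivAt v (deriv F x * w x + F x * (w x * (-(1 / 2) * M x))) x := dF.mul dw
    set v' := deriv F x * w x + F x * (w x * (-(1 / 2) * M x)) with hv'
    have dG : HasDerivAt G (v' * v x + v x * v') x := dv.mul dv
    have dTG : HasDerivAt (fun x => T x * G x) (T' x * G x + T x * (v' * v x + v x * v')) x :=
      (hT x hxI).mul dG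
    rw [dTG.deriv, dG.deriv]
    have e1 : deriv F x ^ 2 * Real.exp (-h x) = (v' + 1 / 2 * M x * v x) ^ 2 := by
      have : Real.exp (-h x) = w x * w x := by rw [hw, ← Real.exp_add]; ring_nf
      rw [this, hv', hv]; ring
    rw [e1]
    have e2 := mul_le_mul_of_nonneg_right (hlam x hx) (mul_self_nonneg (v x))
    -- `v' ^ 2 ≥ 2 * T * v * v' - T ^ 2 * v ^ 2`, the square-completion step of the Riccati method.
    have e3 := sq_nonneg (v' - T x * v x)
    simp only [hG]
    nlinarith
  have := integral_mono_Ioo hab ((i1.add (i2.const_mul (1 / 2))).add (i3.const_mul lam)) i4 hpt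
  rw [intervalIntegral.integral_add (i1.add (i2.const_mul (1 / 2))) (i3.const_mul lam),
    intervalIntegral.integral_add i1 (i2.const_mul (1 / 2)), hTG0,
    intervalIntegral.integral_const_mul, intervalIntegral.integral_const_mul] at this
  simp only [hGw] at this hMG0
  linarith

/-- Neumann inequality for the weight `exp h`, deduced from `core` by duality: if `u` has mean zero,
its weighted primitive `F x = ∫ t in a..x, u t * exp (h t)` vanishes at both ends, and
`∫ u ^ 2 * exp h = -∫ u' F` is bounded through
`-u' F ≤ (u' ^ 2 * exp h) / (2 * lam) + lam * F ^ 2 * exp (-h) / 2`. -/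
lemma gap {a b : ℝ} (hab : a ≤ b) {h M T T' u : ℝ → ℝ} {lam : ℝ} (hlam0 : 0 < lam)
    (hh : ∃ K, LipschitzOnWith K h (Icc a b)) (hM : Antitone M)
    (hhM : ∀ x ∈ Ioo a b, DifferentiableAt ℝ h x → deriv h x = M x)
    (hT : ∀ x ∈ Icc a b, HasDerivAt T (T' x) x) (hT' : ContinuousOn T' (Icc a b))
    (hlam : ∀ x ∈ Ioo a b, lam ≤ -T' x - T x ^ 2 + M x ^ 2 / 4)
    (hu : ∃ K, LipschitzOnWith K u (Icc a b))
    (hmean : ∫ x in a..b, u x * Real.exp (h x) = 0) :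
    lam * ∫ x in a..b, u x ^ 2 * Real.exp (h x) ≤
      ∫ x in a..b, deriv u x ^ 2 * Real.exp (h x) := by
  have hcE : ContinuousOn (fun x => Real.exp (h x)) (Icc a b) := (lip_cont hh).rexp
  have hcN : ContinuousOn (fun x => Real.exp (-h x)) (Icc a b) := (lip_cont hh).neg.rexp
  have hcuE := (lip_cont hu).mul hcE
  have ii : ∀ {g : ℝ → ℝ}, ContinuousOn g (Icc a b) → IntervalIntegrable g volume a b := by
    intro g hg
    rw [← uIcc_of_le hab] at hg
    exact hg.intervalIntegrable
  have iuE : IntervalIntegrable (fun x => u x * Real.exp (h x)) volume a b := ii hcuE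
  set F : ℝ → ℝ := fun x => ∫ t in a..x, u t * Real.exp (h t) with hF
  have hFL : ∃ K, LipschitzOnWith K F (Icc a b) := by
    obtain ⟨C, hC⟩ := isCompact_Icc.exists_bound_of_continuousOn hcuE
    refine ⟨C.toNNReal, LipschitzOnWith.of_dist_le_mul fun x hx y hy => ?_⟩
    have hsub : ∀ {z}, z ∈ Icc a b → uIcc a z ⊆ uIcc a b := fun hz => by
      rw [uIcc_of_le hz.1, uIcc_of_le hab]; exact Icc_subset_Icc le_rfl hz.2
    rw [Real.dist_eq, Real.dist_eq, hF]
    simp only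
    rw [intervalIntegral.integral_interval_sub_left (iuE.mono_set (hsub hx))
      (iuE.mono_set (hsub hy))]
    have hle : ‖∫ t in y..x, u t * Real.exp (h t)‖ ≤ C * |x - y| :=
      intervalIntegral.norm_integral_le_of_norm_le_const fun t ht =>
        hC t (uIcc_subset_Icc hy hx (uIoc_subset_uIcc ht))
    refine hle.trans ?_
    gcongr
    exact Real.le_coe_toNNReal _
  have hFd : ∀ᵐ x, x ∈ Ioo a b → deriv F x = u x * Real.exp (h x) := by
    filter_upwards [iuE.ae_hasDerivAt_integral] with x hx hxI
    rw [uIcc_of_le hab] at hx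
    exact (hx (Ioo_subset_Icc_self hxI) a (left_mem_Icc.2 hab)).deriv
  have congrI : ∀ {f g : ℝ → ℝ}, (∀ᵐ x, x ∈ Ioo a b → f x = g x) →
      ∫ x in a..b, f x = ∫ x in a..b, g x := by
    intro f g hfg
    rw [intervalIntegral.integral_of_le hab, intervalIntegral.integral_of_le hab,
      integral_Ioc_eq_integral_Ioo, integral_Ioc_eq_integral_Ioo]
    exact setIntegral_congr_ae measurableSet_Ioo hfg
  have hFa : F a = 0 := by simp [hF]
  have hFb : F b = 0 := hmean
  have hcore := core hab hh hM hhM hT hT' hlam hFL hFa hFb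
  have hA : ∫ x in a..b, deriv F x ^ 2 * Real.exp (-h x) =
      ∫ x in a..b, u x ^ 2 * Real.exp (h x) := by
    refine congrI ?_
    filter_upwards [hFd] with x hx hxI
    rw [hx hxI, Real.exp_neg]
    have := (Real.exp_pos (h x)).ne'
    field_simp
  have hA2 : ∫ x in a..b, u x ^ 2 * Real.exp (h x) = - ∫ x in a..b, deriv u x * F x := by
    have h1 := (lip_ac hab hu).integral_mul_deriv_eq_deriv_mul (lip_ac hab hFL)
    rw [hFa, hFb, mul_zero, mul_zero, sub_zero, zero_sub] at h1
    rw [← h1]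
    refine congrI ?_
    filter_upwards [hFd] with x hx hxI
    rw [hx hxI]; ring
  have iF : IntervalIntegrable (fun x => F x ^ 2 * Real.exp (-h x)) volume a b :=
    ii (((lip_cont hFL).pow 2).mul hcN)
  have iu : IntervalIntegrable (fun x => deriv u x ^ 2 * Real.exp (h x)) volume a b := by
    have := integrable_deriv_mul_deriv hab hu (integrable_deriv_mul_deriv hab hu (ii hcE))
    refine this.congr (fun x _ => ?_)
    ring
  have hAM : ∫ x in a..b, -(deriv u x * F x) ≤
      ∫ x in a..b, (1 / (2 * lam) * (deriv u x ^ 2 * Real.exp (h x)) +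
        lam / 2 * (F x ^ 2 * Real.exp (-h x))) := by
    refine integral_mono_Ioo hab (integrable_deriv_mul_deriv hab hu (ii (lip_cont hFL))).neg
      ((iu.const_mul _).add (iF.const_mul _)) (ae_of_all _ fun x _ => ?_)
    have e0 := Real.exp_pos (h x)
    rw [Real.exp_neg]
    have e1 : 0 ≤ (deriv u x * Real.exp (h x) + lam * F x) ^ 2 / (2 * lam * Real.exp (h x)) := by
      positivity
    have e2 : (deriv u x * Real.exp (h x) + lam * F x) ^ 2 / (2 * lam * Real.exp (h x)) =
      1 / (2 * lam) * (deriv u x ^ 2 * Real.exp (h x)) + lam / 2 * (F x ^ 2 * (Real.exp (h x))⁻¹)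
        + deriv u x * F x := by
      field_simp; ring
    linarith
  rw [intervalIntegral.integral_neg, ← hA2, intervalIntegral.integral_add (iu.const_mul _)
    (iF.const_mul _), intervalIntegral.integral_const_mul,
    intervalIntegral.integral_const_mul] at hAM
  rw [hA] at hcore
  set A := ∫ x in a..b, u x ^ 2 * Real.exp (h x)
  set D := ∫ x in a..b, deriv u x ^ 2 * Real.exp (h x)
  have h3 : lam * A ≤ lam * (1 / (2 * lam) * D + A / 2) := by
    refine mul_le_mul_of_nonneg_left ?_ hlam0.le
    linarith
  have h4 : lam * (1 / (2 * lam) * D + A / 2) = D / 2 + lam * A / 2 := by field_simp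
  linarith

/-! ### The dichotomy for log-concave weights -/

/-- The derivative of a Lipschitz concave function extends from the points of differentiability to
an antitone function on the whole line. -/
lemma exists_M {a b : ℝ} {h : ℝ → ℝ} (hh : ∃ K, LipschitzOnWith K h (Icc a b))
    (hc : ConcaveOn ℝ (Ioo a b) h) :
    ∃ M : ℝ → ℝ, Antitone M ∧ ∀ x ∈ Ioo a b, DifferentiableAt ℝ h x → deriv h x = M x := by
  obtain ⟨K, hK⟩ := hh
  have h1 : AntitoneOn (deriv h) {x | x ∈ Ioo a b ∧ DifferentiableAt ℝ h x} := by
    rintro x ⟨hx, hdx⟩ y ⟨hy, hdy⟩ hxy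
    rcases hxy.eq_or_lt with rfl | hlt
    · exact le_rfl
    · exact (hc.le_slope_of_hasDerivAt hx hy hlt hdy.hasDerivAt).trans
        (hc.slope_le_of_hasDerivAt hx hy hlt hdx.hasDerivAt)
  obtain ⟨M, hM, hMe⟩ := h1.exists_antitone_extension
    ⟨-K, by rintro _ ⟨x, hx, rfl⟩; exact (abs_le.1 (lip_deriv_bound hK hx.1)).1⟩
    ⟨K, by rintro _ ⟨x, hx, rfl⟩; exact (abs_le.1 (lip_deriv_bound hK hx.1)).2⟩
  exact ⟨M, hM, fun x hx hdx => hMe ⟨hx, hdx⟩⟩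

/-- For a concave exponent `h` on an interval of length `π`, either `h` is constant, or the Neumann
inequality holds with a constant strictly larger than `1`. -/
lemma const_or_gap {h : ℝ → ℝ}
    (hh : ∃ K, LipschitzOnWith K h (Icc (-(Real.pi / 2)) (Real.pi / 2)))
    (hc : ConcaveOn ℝ (Ioo (-(Real.pi / 2)) (Real.pi / 2)) h) :
    (∃ C, ∀ x ∈ Icc (-(Real.pi / 2)) (Real.pi / 2), h x = C) ∨
    ∃ lam : ℝ, 1 < lam ∧ ∀ u : ℝ → ℝ,
      (∃ K, LipschitzOnWith K u (Icc (-(Real.pi / 2)) (Real.pi / 2))) →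
      ∫ x in (-(Real.pi / 2))..(Real.pi / 2), u x * Real.exp (h x) = 0 →
      lam * ∫ x in (-(Real.pi / 2))..(Real.pi / 2), u x ^ 2 * Real.exp (h x) ≤
        ∫ x in (-(Real.pi / 2))..(Real.pi / 2), deriv u x ^ 2 * Real.exp (h x) := by
  have hpi := Real.pi_gt_three
  have hab : -(Real.pi / 2) ≤ Real.pi / 2 := by linarith
  obtain ⟨M, hM, hhM⟩ := exists_M hh hc
  by_cases hM0 : ∀ x ∈ Ioo (-(Real.pi / 2)) (Real.pi / 2), M x = 0
  · left
    have hac := lip_ac hab hh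
    have := hac.const_of_ae_hasDerivAt_zero (by
      filter_upwards [hac.ae_differentiableAt, compl_mem_ae_iff.2 (measure_singleton (-(Real.pi / 2))),
        compl_mem_ae_iff.2 (measure_singleton (Real.pi / 2))] with x hdx hxa hxb hxI
      have hd := hdx hxI
      rw [uIcc_of_le hab] at hxI
      have hx : x ∈ Ioo (-(Real.pi / 2)) (Real.pi / 2) :=
        ⟨lt_of_le_of_ne hxI.1 (Ne.symm hxa), lt_of_le_of_ne hxI.2 hxb⟩
      rw [← hM0 x hx, ← hhM x hx hd]
      exact hd.hasDerivAt)
    rwa [uIcc_of_le hab] at this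
  · right
    push Not at hM0
    obtain ⟨x₀, hx₀, hMx₀⟩ := hM0
    have hc0 : 0 < M x₀ ^ 2 / 4 := by positivity
    -- If `M x₀ > 0`, then `M ^ 2 / 4 ≥ c := M x₀ ^ 2 / 4` to the left of `x₀`, which is the gain
    -- used by `exists_riccati`. If `M x₀ < 0`, the same holds to the right of `x₀`, and `T` is
    -- replaced by `-T (-x)`. The cut at `-1` only ensures that the threshold is negative.
    rcases lt_or_gt_of_ne hMx₀ with hneg | hpos
    · obtain ⟨lam, hlam, T, T', hT, hT', hr, hl⟩ := exists_riccati (a := min (-x₀) (-1))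
        (lt_min (by linarith [hx₀.2]) (by linarith)) ((min_le_right _ _).trans_lt (by norm_num)) hc0
      have hsym : ∀ x ∈ Icc (-(Real.pi / 2)) (Real.pi / 2),
          -x ∈ Icc (-(Real.pi / 2)) (Real.pi / 2) := fun x hx =>
        ⟨by linarith [hx.2], by linarith [hx.1]⟩
      refine ⟨lam, hlam, fun u hu hmean => gap hab (by linarith) hh hM hhM
        (T := fun x => -T (-x)) (T' := fun x => T' (-x)) (fun x hx => ?_) ?_ (fun x hx => ?_)
        hu hmean⟩
      · have hd : HasDerivAt (fun x => -T (-x)) (-(T' (-x) * -1)) x :=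
          ((hT _ (hsym x hx)).comp x (hasDerivAt_neg x)).neg
        rwa [mul_neg_one, neg_neg] at hd
      · exact hT'.comp continuous_neg.continuousOn hsym
      · have hxs := hsym x (Ioo_subset_Icc_self hx)
        rw [neg_sq]
        rcases le_total (min (-x₀) (-1)) (-x) with h1 | h1
        · exact (hr _ hxs h1).trans (le_add_of_nonneg_right (by positivity))
        · refine (hl _ hxs).trans ?_
          have h2 : M x ≤ M x₀ := hM (by linarith [min_le_left (-x₀) (-1)])
          nlinarith
    · obtain ⟨lam, hlam, T, T', hT, hT', hr, hl⟩ := exists_riccati (a := min x₀ (-1))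
        (lt_min hx₀.1 (by linarith)) ((min_le_right _ _).trans_lt (by norm_num)) hc0
      refine ⟨lam, hlam, fun u hu hmean => gap hab (by linarith) hh hM hhM hT hT'
        (fun x hx => ?_) hu hmean⟩
      rcases le_total (min x₀ (-1)) x with h1 | h1
      · exact (hr _ (Ioo_subset_Icc_self hx) h1).trans (le_add_of_nonneg_right (by positivity))
      · refine (hl _ (Ioo_subset_Icc_self hx)).trans ?_
        have h2 : M x₀ ≤ M x := hM (h1.trans (min_le_left _ _))
        nlinarith

/-- Lemma 4.4 of the paper: a one-dimensional `RCD(0, N)` interval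
`([−π/2, π/2], eucl, ρ dx)` — i.e. a positive locally Lipschitz density `ρ` with
`ρ^{1/(N−1)}` concave — whose first nonzero Neumann eigenvalue (the infimum of the
weighted Rayleigh quotient over nonzero Lipschitz functions with zero weighted mean)
equals `1`, has constant density. -/
theorem stmt_6 (N : ℝ) (hN : 1 < N) (ρ : ℝ → ℝ) (K : NNReal)
    (hρ : LipschitzOnWith K ρ (Set.Icc (-(Real.pi / 2)) (Real.pi / 2)))
    (hpos : ∀ x ∈ Set.Icc (-(Real.pi / 2)) (Real.pi / 2), 0 < ρ x)
    (hconc : ConcaveOn ℝ (Set.Ioo (-(Real.pi / 2)) (Real.pi / 2))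
      (fun x => ρ x ^ (1 / (N - 1))))
    (heig : sInf { q : ℝ | ∃ u : ℝ → ℝ,
        (∃ L : NNReal, LipschitzOnWith L u (Set.Icc (-(Real.pi / 2)) (Real.pi / 2))) ∧
        (∃ x ∈ Set.Icc (-(Real.pi / 2)) (Real.pi / 2), u x ≠ 0) ∧
        (∫ x in (-(Real.pi / 2))..(Real.pi / 2), u x * ρ x) = 0 ∧
        q = (∫ x in (-(Real.pi / 2))..(Real.pi / 2),
              (derivWithin u (Set.Icc (-(Real.pi / 2)) (Real.pi / 2)) x) ^ 2 * ρ x) /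
            (∫ x in (-(Real.pi / 2))..(Real.pi / 2), (u x) ^ 2 * ρ x) } = 1) :
    ∀ x ∈ Set.Icc (-(Real.pi / 2)) (Real.pi / 2),
      ∀ y ∈ Set.Icc (-(Real.pi / 2)) (Real.pi / 2), ρ x = ρ y := by
  have hpi := Real.pi_gt_three
  have hab : -(Real.pi / 2) < Real.pi / 2 := by linarith
  set h : ℝ → ℝ := fun x => Real.log (ρ x) with hh
  have hexp : ∀ x ∈ Icc (-(Real.pi / 2)) (Real.pi / 2), Real.exp (h x) = ρ x := fun x hx =>
    Real.exp_log (hpos x hx)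
  have hhL : ∃ K, LipschitzOnWith K h (Icc (-(Real.pi / 2)) (Real.pi / 2)) := by
    obtain ⟨m, hm, hmin⟩ := isCompact_Icc.exists_isMinOn (nonempty_Icc.2 hab.le) hρ.continuousOn
    obtain ⟨m', hm', hmax⟩ := isCompact_Icc.exists_isMaxOn (nonempty_Icc.2 hab.le) hρ.continuousOn
    have hne : ∀ t ∈ Icc (ρ m) (ρ m'), t ≠ 0 := fun t ht => ((hpos m hm).trans_le ht.1).ne'
    exact lip_comp ⟨K, hρ⟩ (fun x hx => ⟨hmin hx, hmax hx⟩)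
      (lip_of_hasDerivAt (fun t ht => Real.hasDerivAt_log (hne t ht))
        (continuousOn_inv₀.mono hne))
  -- `h = (N - 1) * log (ρ ^ (1 / (N - 1)))`, and `log` is increasing and concave.
  have hhc : ConcaveOn ℝ (Ioo (-(Real.pi / 2)) (Real.pi / 2)) h := by
    have hp : ∀ x ∈ Ioo (-(Real.pi / 2)) (Real.pi / 2), 0 < ρ x := fun x hx =>
      hpos x (Ioo_subset_Icc_self hx)
    refine ⟨convex_Ioo _ _, fun x hx y hy s t hs ht hst => ?_⟩
    have hz := (convex_Ioo (-(Real.pi / 2)) (Real.pi / 2)) hx hy hs ht hst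
    have h1 := hconc.2 hx hy hs ht hst
    have hN' : 0 < 1 / (N - 1) := one_div_pos.2 (by linarith)
    have px := Real.rpow_pos_of_pos (hp x hx) (1 / (N - 1))
    have py := Real.rpow_pos_of_pos (hp y hy) (1 / (N - 1))
    have h2 := strictConcaveOn_log_Ioi.concaveOn.2 px py hs ht hst
    have h3 := h2.trans (Real.log_le_log ((convex_Ioi (0 : ℝ)) px py hs ht hst) h1)
    simp only [smul_eq_mul] at h3 hz ⊢
    rw [Real.log_rpow (hp x hx), Real.log_rpow (hp y hy), Real.log_rpow (hp _ hz)] at h3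
    refine le_of_mul_le_mul_left ?_ hN'
    simp only [hh]
    linarith
  rcases const_or_gap hhL hhc with ⟨C, hC⟩ | ⟨lam, hlam, hgap⟩
  · intro x hx y hy
    rw [← hexp x hx, ← hexp y hy, hC x hx, hC y hy]
  · exfalso
    refine absurd heig (ne_of_gt (hlam.trans_le (le_csInf ?_ ?_)))
    -- The set of quotients is nonempty, because `sInf ∅ = 0 ≠ 1`.
    · by_contra hne
      rw [not_nonempty_iff_eq_empty.1 hne, Real.sInf_empty] at heig
      exact zero_ne_one heig
    · rintro q ⟨u, hu, ⟨z, hz, huz⟩, hmean, rfl⟩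
      have cg : ∀ {f g : ℝ → ℝ}, (∀ x ∈ Ioo (-(Real.pi / 2)) (Real.pi / 2), f x = g x) →
          ∫ x in (-(Real.pi / 2))..(Real.pi / 2), f x =
            ∫ x in (-(Real.pi / 2))..(Real.pi / 2), g x := by
        intro f g hfg
        exact intervalIntegral.integral_congr_uIoo (by rwa [uIoo_of_le hab.le])
      have hden : 0 < ∫ x in (-(Real.pi / 2))..(Real.pi / 2), u x ^ 2 * ρ x := by
        refine intervalIntegral.integral_pos hab (((lip_cont hu).pow 2).mul hρ.continuousOn)
          (fun x hx => ?_) ⟨z, hz, ?_⟩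
        · exact mul_nonneg (sq_nonneg _) (hpos x (Ioc_subset_Icc_self hx)).le
        · exact mul_pos (by positivity) (hpos z hz)
      rw [le_div_iff₀ hden]
      have h1 := hgap u hu (by
        rw [← hmean]
        exact cg fun x hx => by rw [hexp x (Ioo_subset_Icc_self hx)])
      have e1 : ∫ x in (-(Real.pi / 2))..(Real.pi / 2), u x ^ 2 * ρ x =
          ∫ x in (-(Real.pi / 2))..(Real.pi / 2), u x ^ 2 * Real.exp (h x) :=
        cg fun x hx => by rw [hexp x (Ioo_subset_Icc_self hx)]
      have e2 : ∫ x in (-(Real.pi / 2))..(Real.pi / 2),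
            (derivWithin u (Icc (-(Real.pi / 2)) (Real.pi / 2)) x) ^ 2 * ρ x =
          ∫ x in (-(Real.pi / 2))..(Real.pi / 2), deriv u x ^ 2 * Real.exp (h x) :=
        cg fun x hx => by
          rw [hexp x (Ioo_subset_Icc_self hx), derivWithin_of_mem_nhds (Icc_mem_nhds hx.1 hx.2)]
      rw [e1, e2]
      exact h1
end

section
/- Let N ∈ (1, ∞), let a < b with b − a ≤ π, and let ρ : [a, b] → (0, ∞) be continuous with x ↦ ρ(x)^{1/(N−1)} concave on (a, b). Then for every Lipschitz function u : [a, b] → ℝ with ∫_a^b u ρ dx = 0 one has ∫_a^b u² ρ dx ≤ ∫_a^b (u′)² ρ dx. -/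
open MeasureTheory Set

/-!
The argument is by duality, and no eigenfunction is needed. Put `F x = ∫ t in a..x, u t * ρ t`;
then `F a = F b = 0`, since `u` has zero weighted mean. Integration by parts and Young's inequality
give
`2 ∫ u² ρ = -2 ∫ u' F ≤ ∫ (u')² ρ + ∫ F² / ρ`,
so it suffices to bound `∫ F² / ρ` by `∫ (F')² / ρ`, which equals `∫ u² ρ`. This is a Wirtinger
inequality with Dirichlet boundary conditions and weight `1 / ρ = exp (-l)`, where `l = log ρ` is
concave (`log_midpoint_concave`).

For smooth `l`, put `w = exp (l / 2) * cos (θ * (t - m))` with `m` the midpoint of `[a, b]` and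
`0 < θ < 1`, and `T = w' / w = l' / 2 - θ * tan (θ * (t - m))`. Then
`((F')² - θ² F²) exp (-l) - (F² exp (-l) T)' = ((F' - F T)² + F² ((l' / 2)² - l'' / 2)) exp (-l)`,
which is nonnegative, and integrating gives the Wirtinger inequality with constant `θ²`. As `l` is
only concave, it is replaced by its piecewise affine interpolation on a fine uniform partition:
the identity with `l'' = 0` holds on each cell (`picone_affine`, `picone_cell`), and the downward
jumps of the slope at the nodes play the role of `-l'' ≥ 0` (`wirtinger_approx`). Refining the
partition and letting `θ → 1` gives `wirtinger`.
-/

/-- Picone's inequality on a cell where the exponent `c + κ * (t - x)` of the weight is affine.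
`κ / 2 - θ * tan (θ * (t - m))` is the logarithmic derivative of
`exp ((c + κ * (t - x)) / 2) * cos (θ * (t - m))`; with `G` its product with
`F ^ 2 * exp (-(c + κ * (t - x)))`, the derivative of `G` is at most the integrand on the right. -/
lemma picone_affine (θ m κ c x y : ℝ) (hxy : x ≤ y) (F f : ℝ → ℝ)
    (hcos : ∀ t ∈ Icc x y, 0 < Real.cos (θ * (t - m)))
    (hF : ContinuousOn F (Icc x y)) (hF' : ∀ t ∈ Ioo x y, HasDerivAt F (f t) t)
    (hf : ContinuousOn f (Icc x y)) :
    F y ^ 2 * Real.exp (-(c + κ * (y - x))) * (κ / 2 - θ * Real.tan (θ * (y - m)))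
      - F x ^ 2 * Real.exp (-c) * (κ / 2 - θ * Real.tan (θ * (x - m)))
      ≤ ∫ t in x..y, (f t ^ 2 - θ ^ 2 * F t ^ 2) * Real.exp (-(c + κ * (t - x))) := by
  have hcont : ContinuousOn (fun t => F t ^ 2 * Real.exp (-(c + κ * (t - x))) *
      (κ / 2 - θ * Real.tan (θ * (t - m)))) (Icc x y) := by
    have h1 : ContinuousOn (fun t => Real.tan (θ * (t - m))) (Icc x y) := by
      intro t ht
      have : ContinuousAt Real.tan (θ * (t - m)) := Real.continuousAt_tan.2 (hcos t ht).ne'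
      exact (ContinuousAt.comp (f := fun t => θ * (t - m)) this (by fun_prop)).continuousWithinAt
    fun_prop
  have hint : IntegrableOn (fun t => (f t ^ 2 - θ ^ 2 * F t ^ 2) *
      Real.exp (-(c + κ * (t - x)))) (Icc x y) := by
    apply ContinuousOn.integrableOn_Icc
    fun_prop
  have key := intervalIntegral.sub_le_integral_of_hasDeriv_right_of_le hxy hcont
    (g' := fun t => (2 * F t * f t * Real.exp (-(c + κ * (t - x))) +
        F t ^ 2 * (Real.exp (-(c + κ * (t - x))) * (-κ))) *
        (κ / 2 - θ * Real.tan (θ * (t - m))) +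
      F t ^ 2 * Real.exp (-(c + κ * (t - x))) *
        (-(θ * (1 / Real.cos (θ * (t - m)) ^ 2 * θ)))) ?_ hint ?_
  · simpa using key
  · intro t ht
    have e1 : HasDerivAt (fun t => -(c + κ * (t - x))) (-κ) t := by
      exact ((((hasDerivAt_id t).sub_const x).const_mul κ).const_add c).neg.congr_deriv (by simp)
    have e2 : HasDerivAt (fun t => θ * (t - m)) θ t := by
      simpa using ((hasDerivAt_id t).sub_const m).const_mul θ
    have e3 := (Real.hasDerivAt_tan (hcos t (Ioo_subset_Icc_self ht)).ne').comp t e2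
    have e4 := (((hF' t ht).pow 2).mul e1.exp).mul ((e3.const_mul θ).const_sub (κ / 2))
    refine HasDerivAt.hasDerivWithinAt (e4.congr_deriv ?_)
    simp
  · intro t ht
    have hc := hcos t (Ioo_subset_Icc_self ht)
    have h1 : 1 / Real.cos (θ * (t - m)) ^ 2 = 1 + Real.tan (θ * (t - m)) ^ 2 := by
      rw [← Real.inv_one_add_tan_sq hc.ne']; simp
    simp only [h1]
    have he := (Real.exp_pos (-(c + κ * (t - x)))).le
    generalize Real.exp (-(c + κ * (t - x))) = E at *
    generalize Real.tan (θ * (t - m)) = τ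
    -- With `T = κ / 2 - θ * τ`, the difference of the two sides is
    -- `((f t - F t * T) ^ 2 + (F t * (κ / 2)) ^ 2) * E`.
    have := mul_nonneg (add_nonneg (sq_nonneg (f t - F t * (κ / 2 - θ * τ)))
      (sq_nonneg (F t * (κ / 2)))) he
    nlinarith

/-- Concavity of a positive power of `ρ` gives midpoint concavity of `log ρ`, up to the endpoints
of the interval by continuity. -/
lemma log_midpoint_concave (N a b : ℝ) (hN : 1 < N)
    (ρ : ℝ → ℝ) (hρc : ContinuousOn ρ (Set.Icc a b))
    (hpos : ∀ x ∈ Set.Icc a b, 0 < ρ x)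
    (hconc : ConcaveOn ℝ (Set.Ioo a b) (fun x => ρ x ^ (1 / (N - 1))))
    (x h : ℝ) (hh : 0 < h) (h1 : a ≤ x - h) (h2 : x + h ≤ b) :
    Real.log (ρ (x - h)) + Real.log (ρ (x + h)) ≤ 2 * Real.log (ρ x) := by
  have hα : 0 < 1 / (N - 1) := by have : 0 < N - 1 := by linarith
                                  positivity
  have key : ∀ s ∈ Ioo 0 h, ρ (x - s) * ρ (x + s) ≤ ρ x ^ 2 := by
    intro s hs
    have m1 : x - s ∈ Ioo a b := ⟨by linarith [hs.2], by linarith [hs.1]⟩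
    have m2 : x + s ∈ Ioo a b := ⟨by linarith [hs.1], by linarith [hs.2]⟩
    have p1 := hpos _ (Ioo_subset_Icc_self m1)
    have p2 := hpos _ (Ioo_subset_Icc_self m2)
    have p0 := hpos x ⟨by linarith, by linarith⟩
    have := hconc.2 m1 m2 (show (0 : ℝ) ≤ 1 / 2 by norm_num)
      (show (0 : ℝ) ≤ 1 / 2 by norm_num) (by norm_num)
    simp only [smul_eq_mul] at this
    rw [show 1 / 2 * (x - s) + 1 / 2 * (x + s) = x by ring] at this
    have q1 := Real.rpow_pos_of_pos p1 (1 / (N - 1))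
    have q2 := Real.rpow_pos_of_pos p2 (1 / (N - 1))
    -- AM-GM: with `p`, `q` the powers at `x - s`, `x + s`, `p * q ≤ ((p + q) / 2) ^ 2`.
    have h3 : (ρ (x - s) * ρ (x + s)) ^ (1 / (N - 1)) ≤ (ρ x ^ 2) ^ (1 / (N - 1)) := by
      rw [Real.mul_rpow p1.le p2.le, sq, Real.mul_rpow p0.le p0.le]
      nlinarith [sq_nonneg (ρ (x - s) ^ (1 / (N - 1)) - ρ (x + s) ^ (1 / (N - 1)))]
    exact (Real.rpow_le_rpow_iff (by positivity) (by positivity) hα).1 h3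
  have key2 : ρ (x - h) * ρ (x + h) ≤ ρ x ^ 2 := by
    have hc : ContinuousOn (fun s => ρ (x - s) * ρ (x + s)) (Icc 0 h) := by
      apply ContinuousOn.mul
      · exact hρc.comp (by fun_prop) fun s hs => ⟨by linarith [hs.2], by linarith [hs.1]⟩
      · exact hρc.comp (by fun_prop) fun s hs => ⟨by linarith [hs.1], by linarith [hs.2]⟩
    rw [← closure_Ioo hh.ne] at hc
    exact le_on_closure key hc continuousOn_const (by rw [closure_Ioo hh.ne]; exact ⟨hh.le, le_rfl⟩)
  have p1 := hpos (x - h) ⟨by linarith, by linarith⟩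
  have p2 := hpos (x + h) ⟨by linarith, by linarith⟩
  have := Real.log_le_log (by positivity) key2
  rw [Real.log_mul p1.ne' p2.ne', Real.log_pow] at this
  exact_mod_cast this

/-- Picone's inequality on a cell `[x, x + d]` where `l` oscillates by at most `ε`: the weight
`exp (-l)` is compared with the exponential of its affine interpolation `l x + κ * (t - x)`, which
agrees with `l` at both ends of the cell and stays `ε`-close to it inside. -/
lemma picone_cell (θ m ε x d : ℝ) (hd : 0 < d) (l F f : ℝ → ℝ)
    (hcos : ∀ t ∈ Icc x (x + d), 0 < Real.cos (θ * (t - m)))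
    (hF : ContinuousOn F (Icc x (x + d)))
    (hF' : ∀ t ∈ Ioo x (x + d), HasDerivAt F (f t) t)
    (hf : ContinuousOn f (Icc x (x + d))) (hl : ContinuousOn l (Icc x (x + d)))
    (hosc : ∀ s ∈ Icc x (x + d), ∀ t ∈ Icc x (x + d), |l s - l t| ≤ ε) :
    F (x + d) ^ 2 * Real.exp (-l (x + d)) *
        ((l (x + d) - l x) / d / 2 - θ * Real.tan (θ * (x + d - m)))
      - F x ^ 2 * Real.exp (-l x) * ((l (x + d) - l x) / d / 2 - θ * Real.tan (θ * (x - m)))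
      ≤ ∫ t in x..(x + d), (Real.exp ε * f t ^ 2 - θ ^ 2 * Real.exp (-ε) * F t ^ 2) *
          Real.exp (-l t) := by
  set κ := (l (x + d) - l x) / d with hκ
  have hκd : κ * d = l (x + d) - l x := by rw [hκ]; field_simp
  have hp := picone_affine θ m κ (l x) x (x + d) (by linarith) F f hcos hF hF' hf
  rw [show l x + κ * (x + d - x) = l (x + d) by rw [add_sub_cancel_left, hκd]; ring] at hp
  refine hp.trans ?_
  apply intervalIntegral.integral_mono_on (by linarith)
  · exact ContinuousOn.intervalIntegrable_of_Icc (by linarith) (by fun_prop)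
  · exact ContinuousOn.intervalIntegrable_of_Icc (by linarith) (by fun_prop)
  · intro t ht
    have o1 := abs_le.1 (hosc x ⟨le_rfl, by linarith⟩ t ht)
    have o2 := abs_le.1 (hosc (x + d) ⟨by linarith, le_rfl⟩ t ht)
    obtain ⟨s, hs0, hs1, hs⟩ : ∃ s : ℝ, 0 ≤ s ∧ s ≤ 1 ∧ t - x = s * d :=
      ⟨(t - x) / d, div_nonneg (by linarith [ht.1]) hd.le,
        (div_le_one hd).2 (by linarith [ht.2]), by field_simp⟩
    have e : l x + κ * (t - x) - l t = (1 - s) * (l x - l t) + s * (l (x + d) - l t) := by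
      rw [hs, show κ * (s * d) = s * (κ * d) by ring, hκd]; ring
    have b1 : l x + κ * (t - x) - l t ≤ ε := by rw [e]; nlinarith
    have b2 : -ε ≤ l x + κ * (t - x) - l t := by rw [e]; nlinarith
    have E1 : Real.exp (-(l x + κ * (t - x))) ≤ Real.exp ε * Real.exp (-l t) := by
      rw [← Real.exp_add]; apply Real.exp_le_exp.2; linarith
    have E2 : Real.exp (-ε) * Real.exp (-l t) ≤ Real.exp (-(l x + κ * (t - x))) := by
      rw [← Real.exp_add]; apply Real.exp_le_exp.2; linarith
    have := mul_le_mul_of_nonneg_left E1 (sq_nonneg (f t))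
    have := mul_le_mul_of_nonneg_left E2 (sq_nonneg (θ * F t))
    linarith

/-- Weighted Wirtinger inequality with a loss: Picone's inequality is summed over a uniform
partition. At interior nodes the boundary terms of neighbouring cells add up with the right sign,
as the slopes of the concave `l` decrease; at `a` and `b` they vanish with `F`. -/
lemma wirtinger_approx (a b ε θ : ℝ) (hab : a < b) (hlen : b - a ≤ Real.pi) (hε : 0 < ε)
    (hθ0 : 0 < θ) (hθ : θ < 1) (l F f : ℝ → ℝ) (hl : ContinuousOn l (Icc a b))
    (hmid : ∀ x h, 0 < h → a ≤ x - h → x + h ≤ b → l (x - h) + l (x + h) ≤ 2 * l x)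
    (hF : ContinuousOn F (Icc a b)) (hF' : ∀ t ∈ Ioo a b, HasDerivAt F (f t) t)
    (hf : ContinuousOn f (Icc a b)) (hFa : F a = 0) (hFb : F b = 0) :
    θ ^ 2 * Real.exp (-ε) * ∫ t in a..b, F t ^ 2 * Real.exp (-l t)
      ≤ Real.exp ε * ∫ t in a..b, f t ^ 2 * Real.exp (-l t) := by
  obtain ⟨δ, hδ, hδl⟩ := Metric.uniformContinuousOn_iff.1
    (isCompact_Icc.uniformContinuousOn_of_continuous hl) ε hε
  obtain ⟨n, hn⟩ := exists_nat_gt ((b - a) / δ)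
  have hn0 : (0 : ℝ) < n := lt_trans (by have := sub_pos.2 hab; positivity) hn
  set d := (b - a) / n with hd
  have hd0 : 0 < d := div_pos (sub_pos.2 hab) hn0
  have hdδ : d < δ := by rw [hd, div_lt_iff₀ hn0]; rw [div_lt_iff₀ hδ] at hn; linarith
  have hnd : n * d = b - a := by rw [hd]; field_simp
  have hx : ∀ j : ℕ, j ≤ n → a + j * d ∈ Icc a b := by
    intro j hj
    have : (j : ℝ) * d ≤ n * d := by gcongr
    exact ⟨by have : 0 ≤ (j : ℝ) * d := by positivity
              linarith, by linarith⟩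
  set m := (a + b) / 2 with hm
  -- `θ < 1` keeps `θ * (t - m)` strictly inside `(-π / 2, π / 2)`, so that the comparison function
  -- `cos (θ * (t - m))` is positive up to the endpoints.
  have hcos : ∀ t ∈ Icc a b, 0 < Real.cos (θ * (t - m)) := by
    intro t ht
    have hh : |t - m| ≤ Real.pi / 2 := by
      rw [abs_le]; constructor <;> linarith [ht.1, ht.2]
    have h2 : |θ * (t - m)| < Real.pi / 2 := by
      rw [abs_mul, abs_of_pos hθ0]
      nlinarith [Real.pi_pos, abs_nonneg (t - m)]
    exact Real.cos_pos_of_mem_Ioo ⟨(abs_lt.1 h2).1, (abs_lt.1 h2).2⟩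
  set φ : ℝ → ℝ := fun t => (Real.exp ε * f t ^ 2 - θ ^ 2 * Real.exp (-ε) * F t ^ 2) *
    Real.exp (-l t) with hφ
  have c1 : ContinuousOn (fun t => f t ^ 2 * Real.exp (-l t)) (Icc a b) := by fun_prop
  have c2 : ContinuousOn (fun t => F t ^ 2 * Real.exp (-l t)) (Icc a b) := by fun_prop
  have hφc : ContinuousOn φ (Icc a b) := by fun_prop
  have hφi : ∀ x ∈ Icc a b, ∀ y ∈ Icc a b, IntervalIntegrable φ volume x y := by
    intro x hx y hy
    exact (hφc.mono (uIcc_subset_Icc hx hy)).intervalIntegrable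
  have ha : a ∈ Icc a b := ⟨le_rfl, hab.le⟩
  have hb : b ∈ Icc a b := ⟨hab.le, le_rfl⟩
  -- The bound at the node `a + j * d` carries the slope of the cell to its right. For `j = n` that
  -- slope involves values of `l` outside `[a, b]`, but it is multiplied by `F b ^ 2 = 0`.
  have main : ∀ j : ℕ, j ≤ n →
      F (a + j * d) ^ 2 * Real.exp (-l (a + j * d)) *
        ((l (a + (j + 1 : ℕ) * d) - l (a + j * d)) / d / 2
          - θ * Real.tan (θ * (a + j * d - m))) ≤ ∫ t in a..(a + j * d), φ t := by
    intro j
    induction j with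
    | zero => intro _; simp [hFa]
    | succ j ih =>
      intro hj
      have ih := ih (by omega)
      have hx0 := hx j (by omega)
      have hx1 := hx (j + 1) hj
      set x := a + j * d with hxdef
      have hxy : a + ((j + 1 : ℕ) : ℝ) * d = x + d := by push_cast; ring
      have hxy2 : a + ((j + 1 + 1 : ℕ) : ℝ) * d = x + d + d := by push_cast; ring
      rw [hxy] at ih hx1 ⊢
      rw [hxy2]
      have hsub : Icc x (x + d) ⊆ Icc a b := Icc_subset_Icc hx0.1 hx1.2
      set κ := (l (x + d) - l x) / d with hκ
      have hp := picone_cell θ m ε x d hd0 l F f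
        (fun t ht => hcos t (hsub ht)) (hF.mono hsub)
        (fun t ht => hF' t ⟨hx0.1.trans_lt ht.1, ht.2.trans_le hx1.2⟩) (hf.mono hsub)
        (hl.mono hsub) fun s hs t ht => by
          have := hδl s (hsub hs) t (hsub ht) (by
            rw [Real.dist_eq, abs_lt]; constructor <;> linarith [hs.1, hs.2, ht.1, ht.2])
          rw [Real.dist_eq] at this
          exact this.le
      rw [← intervalIntegral.integral_add_adjacent_intervals (hφi a ha x hx0)
        (hφi x hx0 _ hx1)]
      have hp2 : F (x + d) ^ 2 * Real.exp (-l (x + d)) *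
          (κ / 2 - θ * Real.tan (θ * (x + d - m))) ≤
          (∫ t in a..x, φ t) + ∫ t in x..(x + d), φ t := by linarith
      rcases Nat.lt_or_ge (j + 1) n with h | h
      · have hx2 := hx (j + 1 + 1) h
        rw [hxy2] at hx2
        have hm2 := hmid (x + d) d hd0 (by linarith [hx0.1]) hx2.2
        rw [add_sub_cancel_right] at hm2
        have hk : (l (x + d + d) - l (x + d)) / d ≤ κ := by
          rw [hκ]; exact div_le_div_of_nonneg_right (by linarith) hd0.le
        have := mul_le_mul_of_nonneg_left hk
          (show 0 ≤ F (x + d) ^ 2 * Real.exp (-l (x + d)) by positivity)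
        linarith
      · have : x + d = b := by
          rw [← hxy, show j + 1 = n by omega, hnd]; ring
        rw [this, hFb] at hp2 ⊢
        simp only [ne_eq, OfNat.ofNat_ne_zero, not_false_eq_true, zero_pow, zero_mul] at hp2 ⊢
        exact hp2
  have hfin := main n le_rfl
  have hsplit : ∫ t in a..b, φ t = Real.exp ε * (∫ t in a..b, f t ^ 2 * Real.exp (-l t)) -
      θ ^ 2 * Real.exp (-ε) * ∫ t in a..b, F t ^ 2 * Real.exp (-l t) := by
    rw [← intervalIntegral.integral_const_mul, ← intervalIntegral.integral_const_mul,
      ← intervalIntegral.integral_sub ((c1.intervalIntegrable_of_Icc hab.le).const_mul _)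
        ((c2.intervalIntegrable_of_Icc hab.le).const_mul _)]
    congr 1 with t
    simp only [hφ]
    ring
  rw [hnd, add_sub_cancel, hFb, hsplit] at hfin
  simp only [ne_eq, OfNat.ofNat_ne_zero, not_false_eq_true, zero_pow, zero_mul] at hfin
  linarith

/-- The weighted Wirtinger inequality with weight `exp (-l)`, `l` concave: the limit `ε → 0` of
`wirtinger_approx` with `θ = exp (-ε)`. -/
lemma wirtinger (a b : ℝ) (hab : a < b) (hlen : b - a ≤ Real.pi) (l F f : ℝ → ℝ)
    (hl : ContinuousOn l (Icc a b))
    (hmid : ∀ x h, 0 < h → a ≤ x - h → x + h ≤ b → l (x - h) + l (x + h) ≤ 2 * l x)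
    (hF : ContinuousOn F (Icc a b)) (hF' : ∀ t ∈ Ioo a b, HasDerivAt F (f t) t)
    (hf : ContinuousOn f (Icc a b)) (hFa : F a = 0) (hFb : F b = 0) :
    ∫ t in a..b, F t ^ 2 * Real.exp (-l t) ≤ ∫ t in a..b, f t ^ 2 * Real.exp (-l t) := by
  set A := ∫ t in a..b, F t ^ 2 * Real.exp (-l t)
  set B := ∫ t in a..b, f t ^ 2 * Real.exp (-l t)
  have h : ∀ ε ∈ Ioi (0 : ℝ), Real.exp (-ε) ^ 2 * Real.exp (-ε) * A ≤ Real.exp ε * B :=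
    fun ε hε => wirtinger_approx a b ε (Real.exp (-ε)) hab hlen hε (Real.exp_pos _)
      (by simpa using hε) l F f hl hmid hF hF' hf hFa hFb
  have := le_on_closure h (x := 0) (by fun_prop) (by fun_prop) (by simp)
  simpa using this

/-- One-dimensional spectral-gap comparison (inequality (4.1) of the paper): on a
`CD(0, N)` needle `([a, b], eucl, ρ dx)` with `b − a ≤ π` — i.e. `ρ > 0` continuous
with `ρ^{1/(N−1)}` concave — every Lipschitz function `u` with zero weighted mean
satisfies the Poincaré inequality `∫ u² ρ ≤ ∫ (u′)² ρ`. -/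
theorem stmt_7 (N a b : ℝ) (hN : 1 < N) (hab : a < b) (hlen : b - a ≤ Real.pi)
    (ρ : ℝ → ℝ) (hρc : ContinuousOn ρ (Set.Icc a b))
    (hpos : ∀ x ∈ Set.Icc a b, 0 < ρ x)
    (hconc : ConcaveOn ℝ (Set.Ioo a b) (fun x => ρ x ^ (1 / (N - 1)))) :
    ∀ (u : ℝ → ℝ) (K : NNReal), LipschitzOnWith K u (Set.Icc a b) →
      (∫ x in a..b, u x * ρ x) = 0 →
      (∫ x in a..b, (u x) ^ 2 * ρ x) ≤
        (∫ x in a..b, (derivWithin u (Set.Icc a b) x) ^ 2 * ρ x) := by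
  intro u K hu hmean
  have huc := hu.continuousOn
  set f : ℝ → ℝ := fun x => u x * ρ x with hfdef
  have hfc : ContinuousOn f (Icc a b) := huc.mul hρc
  have hfi : IntervalIntegrable f volume a b := hfc.intervalIntegrable_of_Icc hab.le
  set F : ℝ → ℝ := fun x => ∫ t in a..x, f t with hFdef
  have hFac : AbsolutelyContinuousOnInterval F a b :=
    hfi.absolutelyContinuousOnInterval_intervalIntegral (by simp)
  have hFc : ContinuousOn F (Icc a b) := by
    simpa [uIcc_of_le hab.le] using hFac.continuousOn
  have hF' : ∀ t ∈ Ioo a b, HasDerivAt F (f t) t := by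
    intro t ht
    have hn : Icc a b ∈ nhds t := Icc_mem_nhds ht.1 ht.2
    apply intervalIntegral.integral_hasDerivAt_right
    · exact (hfc.mono (Icc_subset_Icc_right ht.2.le)).intervalIntegrable_of_Icc ht.1.le
    · exact hfc.stronglyMeasurableAtFilter_nhdsWithin measurableSet_Icc t |>.filter_mono
        (by rw [nhdsWithin_eq_nhds.2 hn])
    · exact hfc.continuousAt hn
  have hFa : F a = 0 := by simp [hFdef]
  -- The zero weighted mean of `u` is the boundary condition of `F` at `b`.
  have hFb : F b = 0 := hmean
  have hlc : ContinuousOn (fun x => Real.log (ρ x)) (Icc a b) :=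
    hρc.log fun x hx => (hpos x hx).ne'
  have hW := wirtinger a b hab hlen (fun x => Real.log (ρ x)) F f hlc
    (fun x h => log_midpoint_concave N a b hN ρ hρc hpos hconc x h) hFc hF' hfc hFa hFb
  have hexp : ∀ x ∈ Icc a b, Real.exp (-Real.log (ρ x)) = (ρ x)⁻¹ := by
    intro x hx
    rw [Real.exp_neg, Real.exp_log (hpos x hx)]
  have hae : ∀ᵐ x : ℝ, x ≠ b := by simp [ae_iff]
  have hW2 : ∫ t in a..b, F t ^ 2 * (ρ t)⁻¹ ≤ ∫ t in a..b, u t ^ 2 * ρ t := by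
    have e1 : ∫ t in a..b, F t ^ 2 * Real.exp (-Real.log (ρ t))
        = ∫ t in a..b, F t ^ 2 * (ρ t)⁻¹ := by
      apply intervalIntegral.integral_congr
      intro x hx
      rw [uIcc_of_le hab.le] at hx
      simp only [hexp x hx]
    have e2 : ∫ t in a..b, f t ^ 2 * Real.exp (-Real.log (ρ t))
        = ∫ t in a..b, u t ^ 2 * ρ t := by
      apply intervalIntegral.integral_congr
      intro x hx
      rw [uIcc_of_le hab.le] at hx
      have := (hpos x hx).ne'
      simp only [hexp x hx, hfdef]
      field_simp
    rwa [e1, e2] at hW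
  have huac : AbsolutelyContinuousOnInterval u a b :=
    LipschitzOnWith.absolutelyContinuousOnInterval (K := K) (by rwa [uIcc_of_le hab.le])
  -- With `F' = u * ρ` and `F a = F b = 0`, this reads `∫ u² ρ = -∫ u' F`.
  have hibp := huac.integral_mul_deriv_eq_deriv_mul hFac
  rw [hFa, hFb] at hibp
  have e3 : ∫ x in a..b, u x * deriv F x = ∫ x in a..b, u x ^ 2 * ρ x := by
    apply intervalIntegral.integral_congr_ae
    filter_upwards [hae] with x hxb hx
    rw [uIoc_of_le hab.le] at hx
    rw [(hF' x ⟨hx.1, lt_of_le_of_ne hx.2 hxb⟩).deriv]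
    simp only [hfdef]; ring
  have e4 : ∫ x in a..b, (derivWithin u (Icc a b) x) ^ 2 * ρ x
      = ∫ x in a..b, (deriv u x) ^ 2 * ρ x := by
    apply intervalIntegral.integral_congr_ae
    filter_upwards [hae] with x hxb hx
    rw [uIoc_of_le hab.le] at hx
    rw [derivWithin_of_mem_nhds (Icc_mem_nhds hx.1 (lt_of_le_of_ne hx.2 hxb))]
  rw [e4]
  have i1 : IntervalIntegrable (fun x => F x ^ 2 * (ρ x)⁻¹) volume a b := by
    apply ContinuousOn.intervalIntegrable_of_Icc hab.le
    exact (hFc.pow 2).mul (hρc.inv₀ fun x hx => (hpos x hx).ne')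
  have i2 : IntervalIntegrable (fun x => deriv u x ^ 2 * ρ x) volume a b := by
    apply IntervalIntegrable.mul_continuousOn _ (by rwa [uIcc_of_le hab.le])
    have hc : IntervalIntegrable (fun _ : ℝ => (K : ℝ) ^ 2) volume a b :=
      intervalIntegrable_const
    refine hc.mono_fun ((measurable_deriv u).pow_const 2).aestronglyMeasurable ?_
    rw [uIoc_of_le hab.le]
    refine (ae_restrict_iff' measurableSet_Ioc).2 ?_
    filter_upwards [hae] with x hxb hx
    have := norm_deriv_le_of_lipschitzOn
      (Icc_mem_nhds hx.1 (lt_of_le_of_ne hx.2 hxb)) hu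
    rw [norm_pow, norm_pow]
    gcongr
    simpa using this
  have i3 : IntervalIntegrable (fun x => deriv u x * F x) volume a b :=
    huac.intervalIntegrable_deriv.mul_continuousOn (by rwa [uIcc_of_le hab.le])
  -- Young's inequality `-2 u' F ≤ (u')² ρ + F² / ρ`.
  have hY : ∫ x in a..b, -(2 * (deriv u x * F x)) ≤
      ∫ x in a..b, (deriv u x ^ 2 * ρ x + F x ^ 2 * (ρ x)⁻¹) := by
    apply intervalIntegral.integral_mono_on hab.le (i3.const_mul 2).neg (i2.add i1)
    intro x hx
    have hp := hpos x hx
    have : deriv u x ^ 2 * ρ x + F x ^ 2 * (ρ x)⁻¹ + 2 * (deriv u x * F x)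
        = (deriv u x * ρ x + F x) ^ 2 * (ρ x)⁻¹ := by field_simp; ring
    have h0 : 0 ≤ (deriv u x * ρ x + F x) ^ 2 * (ρ x)⁻¹ := by positivity
    simp only [Pi.neg_apply]
    linarith
  rw [intervalIntegral.integral_add i2 i1, intervalIntegral.integral_neg,
    intervalIntegral.integral_const_mul] at hY
  linarith
end
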